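/- For every integer t ≥ 3 there exists a finite simple graph H that is 3-regular (cubic) and 2-connected, contains G_t as an induced subgraph in such a way that every edge of H joining a vertex of G_t to a vertex outside G_t is incident to v_1 or to v_2, and in which both u_1 and u_2 are Šoltés vertices of H. -/

import Mathlib

open SimpleGraph Finset

/-- A `Fintype` instance for the vertex set of a vertex-deleted subgraph. -/
noncomputable instance instFintypeNe {V : Type*} [Fintype V] (v : V) :
    Fintype {u : V // u ≠ v} :=
  (Set.toFinite {u : V | u ≠ v}).fintype

/-- The graph obtained from `G` by deleting the vertex `v` (an induced subgraph). -/
def deleteVertex {V : Type*} (G : SimpleGraph V) (v : V) :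
    SimpleGraph {u : V // u ≠ v} :=
  G.induce {u : V | u ≠ v}

/-- The Wiener index of a finite simple graph: the sum of distances over all
unordered pairs of vertices. -/
noncomputable def wiener {V : Type*} [Fintype V] (G : SimpleGraph V) : ℕ :=
  (∑ u : V, ∑ v : V, G.dist u v) / 2

/-- `v` is a Šoltés vertex of `G` if `G - v` is connected and has the same Wiener index. -/
def IsSoltes {V : Type*} [Fintype V] (G : SimpleGraph V) (v : V) : Prop :=
  (deleteVertex G v).Connected ∧ wiener (deleteVertex G v) = wiener G

/-- A graph is cubic (3-regular) if every vertex has exactly 3 neighbours. -/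
def IsCubic {V : Type*} (G : SimpleGraph V) : Prop :=
  ∀ v : V, (G.neighborSet v).ncard = 3

/-- A finite graph is 2-connected if it is connected, has at least 3 vertices,
and stays connected after deleting any one vertex. -/
def TwoConnected {V : Type*} [Fintype V] (G : SimpleGraph V) : Prop :=
  G.Connected ∧ 3 ≤ Fintype.card V ∧ ∀ v : V, (deleteVertex G v).Connected

/-! ### The graph `G_t`

`G_t` has `8t + 8` vertices: `2t` diamonds (copies of `K₄ − e`) arranged in a ring,
where each diamond `j` has vertices `A_j, B_j, C_j, D_j` (encoded as
`Sum.inl (j, 0), …, Sum.inl (j, 3)`), `A_j, B_j` being its two degree-2 vertices;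
consecutive diamonds are joined by the edges `B_j A_{j+1}`, and the remaining
connecting edge (between diamond `2t-1` and diamond `0`) is subdivided by the two
adjacent vertices `z₁, z₂` (encoded `Sum.inr 0, Sum.inr 1`); there is a 4-cycle
`c₁ c₁ₐ c₂ c₂ₐ` (encoded `Sum.inr 2, Sum.inr 4, Sum.inr 3, Sum.inr 5`) whose opposite
vertices `c₁, c₂` are joined to `z₁, z₂` respectively, and pendant leaves
`v₁, v₂` (encoded `Sum.inr 6, Sum.inr 7`) are attached to `c₁ₐ, c₂ₐ`. -/

/-- The vertex type of the graph `G_t`. -/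
abbrev GtV (t : ℕ) : Type := (Fin (2 * t) × Fin 4) ⊕ Fin 8

/-- The edges inside one diamond `K₄ − e`: `A–C, A–D, B–C, B–D, C–D` where
`A, B, C, D` are encoded as `0, 1, 2, 3`. -/
def diamondRel (a b : Fin 4) : Prop :=
  ((a : ℕ) = 0 ∧ (b : ℕ) = 2) ∨ ((a : ℕ) = 0 ∧ (b : ℕ) = 3) ∨
  ((a : ℕ) = 1 ∧ (b : ℕ) = 2) ∨ ((a : ℕ) = 1 ∧ (b : ℕ) = 3) ∨
  ((a : ℕ) = 2 ∧ (b : ℕ) = 3)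

/-- The base edge relation of `G_t` (symmetrized by `SimpleGraph.fromRel`). -/
def gtRel (t : ℕ) : GtV t → GtV t → Prop
  | Sum.inl (j, a), Sum.inl (k, b) =>
      -- edges inside a diamond, and the connecting edges `B_j A_{j+1}`
      (j = k ∧ diamondRel a b) ∨ ((k : ℕ) = (j : ℕ) + 1 ∧ (a : ℕ) = 1 ∧ (b : ℕ) = 0)
  | Sum.inl (j, a), Sum.inr m =>
      -- the edge `B_{2t-1} z₁` (half of the subdivided connecting edge)
      (j : ℕ) = 2 * t - 1 ∧ (a : ℕ) = 1 ∧ (m : ℕ) = 0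
  | Sum.inr m, Sum.inl (j, a) =>
      -- the edge `z₂ A_0` (the other half of the subdivided connecting edge)
      (m : ℕ) = 1 ∧ (j : ℕ) = 0 ∧ (a : ℕ) = 0
  | Sum.inr m, Sum.inr m' =>
      ((m : ℕ) = 0 ∧ (m' : ℕ) = 1) ∨    -- z₁ z₂
      ((m : ℕ) = 0 ∧ (m' : ℕ) = 2) ∨    -- z₁ c₁
      ((m : ℕ) = 1 ∧ (m' : ℕ) = 3) ∨    -- z₂ c₂
      ((m : ℕ) = 2 ∧ (m' : ℕ) = 4) ∨    -- c₁ c₁ₐ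
      ((m : ℕ) = 4 ∧ (m' : ℕ) = 3) ∨    -- c₁ₐ c₂
      ((m : ℕ) = 3 ∧ (m' : ℕ) = 5) ∨    -- c₂ c₂ₐ
      ((m : ℕ) = 5 ∧ (m' : ℕ) = 2) ∨    -- c₂ₐ c₁
      ((m : ℕ) = 4 ∧ (m' : ℕ) = 6) ∨    -- c₁ₐ v₁
      ((m : ℕ) = 5 ∧ (m' : ℕ) = 7)      -- c₂ₐ v₂

/-- The graph `G_t` on `8t + 8` vertices. -/
def GtGraph (t : ℕ) : SimpleGraph (GtV t) := SimpleGraph.fromRel (gtRel t)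

/-- The leaf `v₁` of `G_t`. -/
def gtv1 (t : ℕ) : GtV t := Sum.inr 6

/-- The leaf `v₂` of `G_t`. -/
def gtv2 (t : ℕ) : GtV t := Sum.inr 7

/-- The vertex `u₁ = B_{t-1}` of `G_t`: an endpoint of the edge joining the `t`-th and
`(t+1)`-st diamond, counting from the subdivided edge. -/
def gtu1 (t : ℕ) (ht : 1 ≤ t) : GtV t := Sum.inl (⟨t - 1, by omega⟩, 1)

/-- The vertex `u₂ = A_t` of `G_t`: the other endpoint of the edge joining the `t`-th
and `(t+1)`-st diamond, counting from the subdivided edge. -/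
def gtu2 (t : ℕ) (ht : 1 ≤ t) : GtV t := Sum.inl (⟨t, by omega⟩, 0)

/-!
The leaves `v₁`, `v₂` of `G_t` are replaced by two vertices of degree 2, the ports, of a suitable
graph, the plug. The two middle vertices of the ring of diamonds are cut vertices of the arc of
diamonds, so deleting one of them, `u`, changes only the distances between diamond vertices on
different sides of `u`, which are then joined by the way around the ring. This increases the Wiener
index by `16 t³ + 4 t² - 2 t` in total, whatever the plug is, and `u` is a Šoltés vertex if this
equals the sum of the distances from `u`. That sum depends on the plug only through the distances to
its ports, so it suffices to build plugs with a prescribed value of it: for `t ≥ 4` ladders in which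
two pairs of adjacent rungs are subdivided, whose length gives the coarse and whose rungs the fine
adjustment, and for `t = 3` a sporadic graph.

For 2-connectedness, number the vertices so that every vertex except the first has a neighbour with
a smaller number and every vertex except the last one with a larger number. With the first and the
last vertex adjacent, no vertex can separate the graph.
-/

/-! ### Distances -/

section Distance

variable {V W : Type*} {G : SimpleGraph V} {H : SimpleGraph W}

theorem dist_map_le {f : V → W} (hf : ∀ ⦃x y⦄, G.Adj x y → f x = f y ∨ H.Adj (f x) (f y))
    {x y : V} (hxy : G.Reachable x y) : H.dist (f x) (f y) ≤ G.dist x y := by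
  obtain ⟨p, hp⟩ := hxy.exists_walk_length_eq_dist
  rw [← hp]
  clear hp hxy
  suffices h : ∃ q : H.Walk (f x) (f y), q.length ≤ p.length from
    h.elim fun q hq => (dist_le q).trans hq
  induction p with
  | nil => exact ⟨Walk.nil, le_rfl⟩
  | cons h p ih =>
    obtain ⟨q, hq⟩ := ih
    rcases hf h with heq | hadj
    · exact heq ▸ ⟨q, hq.trans (Nat.le_succ _)⟩
    · exact ⟨Walk.cons hadj q, Nat.succ_le_succ hq⟩

theorem le_add_dist_of_lipschitz {F : V → ℕ} (hF : ∀ ⦃x y⦄, G.Adj x y → F y ≤ F x + 1)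
    {x y : V} (hxy : G.Reachable x y) : F y ≤ F x + G.dist x y := by
  obtain ⟨p, hp⟩ := hxy.exists_walk_length_eq_dist
  rw [← hp]
  clear hp hxy
  induction p with
  | nil => exact le_rfl
  | cons h p ih =>
    have := hF h
    rw [Walk.length_cons]
    omega

/-- `d` is the distance to the vertex set `S` in `G`, characterised locally: it vanishes on `S`,
is `1`-Lipschitz, and every vertex outside `S` has a neighbour closer to `S`. -/
structure IsDistanceTo (G : SimpleGraph V) (S : Set V) (d : V → ℕ) : Prop where
  eq_zero : ∀ ⦃x⦄, x ∈ S → d x = 0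
  le_add_one : ∀ ⦃x y⦄, G.Adj x y → d y ≤ d x + 1
  exists_adj : ∀ ⦃x⦄, x ∉ S → ∃ y, G.Adj x y ∧ d y + 1 = d x

theorem IsDistanceTo.exists_walk {u : V} {d : V → ℕ} (h : IsDistanceTo G {u} d) (x : V) :
    ∃ p : G.Walk u x, p.length = d x := by
  induction hn : d x generalizing x with
  | zero =>
    by_cases hx : x = u
    · exact hx ▸ ⟨Walk.nil, rfl⟩
    · obtain ⟨y, -, hy⟩ := h.exists_adj hx
      omega
  | succ n ih =>
    have hx : x ∉ ({u} : Set V) := fun hx => by simp [h.eq_zero hx] at hn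
    obtain ⟨y, hxy, hy⟩ := h.exists_adj hx
    obtain ⟨p, hp⟩ := ih y (by omega)
    exact ⟨p.concat hxy.symm, by rw [Walk.length_concat, hp]⟩

theorem IsDistanceTo.dist_eq {u : V} {d : V → ℕ} (h : IsDistanceTo G {u} d) (x : V) :
    G.dist u x = d x := by
  obtain ⟨p, hp⟩ := h.exists_walk x
  have hle := le_add_dist_of_lipschitz h.le_add_one p.reachable
  rw [h.eq_zero rfl, zero_add] at hle
  exact le_antisymm (hp ▸ dist_le p) hle

theorem deleteVertex_adj {v : V} {x y : {x // x ≠ v}} :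
    (deleteVertex G v).Adj x y ↔ G.Adj x y :=
  Iff.rfl

theorem dist_le_dist_deleteVertex {v : V} (h : (deleteVertex G v).Connected) (x y : {x // x ≠ v}) :
    G.dist x y ≤ (deleteVertex G v).dist x y :=
  dist_map_le (f := Subtype.val) (fun _ _ hadj => Or.inr hadj) (h x y)

theorem dist_deleteVertex_eq_of_retraction {v : V} (h : (deleteVertex G v).Connected) {f : V → V}
    (hf : ∀ ⦃x y⦄, G.Adj x y → f x = f y ∨ G.Adj (f x) (f y)) (hv : ∀ x, f x ≠ v)
    {x y : {x // x ≠ v}} (hx : f x = x) (hy : f y = y) :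
    (deleteVertex G v).dist x y = G.dist x y := by
  have hle := dist_le_dist_deleteVertex h x y
  refine le_antisymm ?_ hle
  have hreach : G.Reachable x y := (h x y).map ⟨Subtype.val, id⟩
  have := dist_map_le (H := deleteVertex G v) (f := fun x => ⟨f x, hv x⟩)
    (fun a b hab => (hf hab).imp_left Subtype.ext) hreach
  simpa only [hx, hy] using this

end Distance

/-! ### Numberings that certify 2-connectedness -/

section STNumbering

variable {V : Type*} {G : SimpleGraph V} {s e : V} {σ : V → ℕ}

/-- `σ` is an `s`-`e`-numbering of `G`: every vertex other than the source `s` has a neighbour with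
a smaller number, and every vertex other than the sink `e` one with a larger number. -/
structure IsSTNumbering (G : SimpleGraph V) (s e : V) (σ : V → ℕ) : Prop where
  exists_lt : ∀ ⦃x⦄, x ≠ s → ∃ y, G.Adj x y ∧ σ y < σ x
  exists_gt : ∀ ⦃x⦄, x ≠ e → ∃ y, G.Adj x y ∧ σ x < σ y

theorem IsSTNumbering.connected (h : IsSTNumbering G s e σ) : G.Connected := by
  have hreach : ∀ x, G.Reachable x s := fun x => by
    induction hn : σ x using Nat.strong_induction_on generalizing x with
    | _ n ih =>
      by_cases hx : x = s
      · exact hx ▸ Reachable.refl _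
      · obtain ⟨y, hxy, hlt⟩ := h.exists_lt hx
        exact hxy.reachable.trans (ih (σ y) (hn ▸ hlt) y rfl)
  have : Nonempty V := ⟨s⟩
  exact ⟨fun x y => (hreach x).trans (hreach y).symm⟩

theorem IsSTNumbering.source_lt (h : IsSTNumbering G s e σ) {x : V} (hx : x ≠ s) : σ s < σ x := by
  induction hn : σ x using Nat.strong_induction_on generalizing x with
  | _ n ih =>
    obtain ⟨y, -, hlt⟩ := h.exists_lt hx
    rcases eq_or_ne y s with rfl | hy
    · exact hn ▸ hlt
    · exact (ih (σ y) (hn ▸ hlt) hy rfl).trans (hn ▸ hlt)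

theorem IsSTNumbering.reverse (h : IsSTNumbering G s e σ) {N : ℕ} (hN : ∀ x, σ x ≤ N) :
    IsSTNumbering G e s fun x => N - σ x where
  exists_lt x hx := by
    obtain ⟨y, hxy, hlt⟩ := h.exists_gt hx
    have := hN y
    exact ⟨y, hxy, by omega⟩
  exists_gt x hx := by
    obtain ⟨y, hxy, hlt⟩ := h.exists_lt hx
    have := hN x
    exact ⟨y, hxy, by omega⟩

theorem deleteVertex_reachable_of_descent {f : V → ℕ}
    (hf : ∀ ⦃x⦄, x ≠ s → ∃ y, G.Adj x y ∧ f y < f x) {v x : V} (hx : x ≠ v) (hxv : f x ≤ f v) :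
    ∃ hs : s ≠ v, (deleteVertex G v).Reachable ⟨x, hx⟩ ⟨s, hs⟩ := by
  induction hn : f x using Nat.strong_induction_on generalizing x with
  | _ n ih =>
    by_cases hxs : x = s
    · subst hxs
      exact ⟨hx, Reachable.refl _⟩
    · obtain ⟨y, hxy, hlt⟩ := hf hxs
      have hyv : y ≠ v := by
        rintro rfl
        omega
      obtain ⟨hs, hreach⟩ := ih (f y) (hn ▸ hlt) hyv (by omega) rfl
      exact ⟨hs, (deleteVertex_adj.2 hxy).reachable.trans hreach⟩

theorem IsSTNumbering.deleteVertex_connected [Finite V] (h : IsSTNumbering G s e σ)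
    (hse : G.Adj s e) (v : V) : (deleteVertex G v).Connected := by
  obtain ⟨N, hN⟩ := (Set.finite_range σ).bddAbove
  have hdown : ∀ x (hx : x ≠ v), σ x ≤ σ v →
      ∃ hs : s ≠ v, (deleteVertex G v).Reachable ⟨x, hx⟩ ⟨s, hs⟩ :=
    fun x hx => deleteVertex_reachable_of_descent h.exists_lt hx
  have hup : ∀ x (hx : x ≠ v), σ v ≤ σ x →
      ∃ he : e ≠ v, (deleteVertex G v).Reachable ⟨x, hx⟩ ⟨e, he⟩ := fun x hx hvx =>
    deleteVertex_reachable_of_descent (h.reverse fun x => hN ⟨x, rfl⟩).exists_lt hx (by omega)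
  suffices ∃ r, ∀ x, (deleteVertex G v).Reachable x r by
    obtain ⟨r, hr⟩ := this
    have : Nonempty {u : V // u ≠ v} := ⟨r⟩
    exact ⟨fun x y => (hr x).trans (hr y).symm⟩
  by_cases hs : s = v
  · have he : e ≠ v := fun he => hse.ne (hs.trans he.symm)
    refine ⟨⟨e, he⟩, fun ⟨x, hx⟩ => ?_⟩
    rcases le_total (σ x) (σ v) with hxv | hxv
    · exact absurd hs (hdown x hx hxv).1
    · exact (hup x hx hxv).2
  · refine ⟨⟨s, hs⟩, fun ⟨x, hx⟩ => ?_⟩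
    rcases le_total (σ x) (σ v) with hxv | hxv
    · exact (hdown x hx hxv).2
    · obtain ⟨he, hreach⟩ := hup x hx hxv
      exact hreach.trans (deleteVertex_adj.2 hse.symm).reachable

end STNumbering

/-! ### Invariance under isomorphism -/

section Iso

variable {V W : Type*} {G : SimpleGraph V} {H : SimpleGraph W}

theorem dist_iso_apply (φ : G ≃g H) (x y : V) : H.dist (φ x) (φ y) = G.dist x y := by
  rw [dist_eq_sInf, dist_eq_sInf]
  congr 1
  ext n
  constructor
  · rintro ⟨p, rfl⟩
    exact ⟨(p.map φ.symm.toHom).copy (φ.symm_apply_apply x) (φ.symm_apply_apply y), by simp⟩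
  · rintro ⟨p, rfl⟩
    exact ⟨p.map φ.toHom, by simp⟩

theorem wiener_congr [Fintype V] [Fintype W] (φ : G ≃g H) : wiener G = wiener H := by
  unfold wiener
  simp only [← φ.toEquiv.sum_comp]
  exact congrArg (· / 2) (sum_congr rfl fun x _ => sum_congr rfl fun y _ =>
    (dist_iso_apply φ x y).symm)

/-- The isomorphism `G - v ≃g H - φ v` induced by `φ : G ≃g H`. -/
def deleteVertexIso (φ : G ≃g H) (v : V) : deleteVertex G v ≃g deleteVertex H (φ v) where
  toEquiv := φ.toEquiv.subtypeEquiv fun _ => φ.injective.ne_iff.symm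
  map_rel_iff' := φ.map_rel_iff

theorem IsSoltes.congr [Fintype V] [Fintype W] (φ : G ≃g H) {v : V} (h : IsSoltes G v) :
    IsSoltes H (φ v) := by
  refine ⟨(deleteVertexIso φ v).connected_iff.1 h.1, ?_⟩
  rw [← wiener_congr (deleteVertexIso φ v), ← wiener_congr φ, h.2]

theorem TwoConnected.congr [Fintype V] [Fintype W] (φ : G ≃g H) (h : TwoConnected G) :
    TwoConnected H := by
  refine ⟨φ.connected_iff.1 h.1, Fintype.card_congr φ.toEquiv ▸ h.2.1, fun w => ?_⟩
  obtain ⟨v, rfl⟩ := φ.surjective w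
  exact (deleteVertexIso φ v).connected_iff.1 (h.2.2 v)

theorem IsCubic.congr (φ : G ≃g H) (h : IsCubic G) : IsCubic H := fun w => by
  obtain ⟨v, rfl⟩ := φ.surjective w
  rw [← h v, ← Set.ncard_image_of_injective _ φ.injective]
  congr 1
  ext x
  obtain ⟨y, rfl⟩ := φ.surjective x
  simp [φ.map_adj_iff]

end Iso

/-! ### A criterion for Šoltés vertices -/

section Soltes

variable {V : Type*} [Fintype V]

theorem sum_eq_add_sum_ne {M : Type*} [AddCommMonoid M] (F : V → M) (u : V) :
    ∑ x, F x = F u + ∑ x : {x // x ≠ u}, F x := by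
  classical
  rw [Fintype.sum_eq_add_sum_subtype_ne F u]
  congr!

theorem sum_dist_eq_add_sum_ne (G : SimpleGraph V) (u : V) :
    ∑ x, ∑ y, G.dist x y =
      2 * ∑ y, G.dist u y + ∑ x : {x // x ≠ u}, ∑ y : {y // y ≠ u}, G.dist x y := by
  have hrow : ∑ x : {x // x ≠ u}, G.dist x u = ∑ y : {y // y ≠ u}, G.dist u y :=
    sum_congr rfl fun x _ => G.dist_comm
  simp only [sum_eq_add_sum_ne _ u, sum_add_distrib, dist_self, hrow]
  ring

theorem isSoltes_of_dist_deleteVertex_eq_add {G : SimpleGraph V} {u : V}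
    (hconn : (deleteVertex G u).Connected) {inc : V → V → ℕ}
    (hleft : ∀ y, inc u y = 0) (hright : ∀ x, inc x u = 0)
    (hdist : ∀ x y : {x // x ≠ u}, (deleteVertex G u).dist x y = G.dist x y + inc x y)
    (hsum : ∑ x, ∑ y, inc x y = 2 * ∑ y, G.dist u y) : IsSoltes G u := by
  have hinc : ∑ x, ∑ y, inc x y = ∑ x : {x // x ≠ u}, ∑ y : {y // y ≠ u}, inc x y := by
    rw [sum_eq_add_sum_ne _ u]
    simp only [hleft, sum_const_zero, zero_add]
    refine sum_congr rfl fun x _ => ?_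
    rw [sum_eq_add_sum_ne _ u, hright, zero_add]
  refine ⟨hconn, ?_⟩
  unfold wiener
  rw [sum_dist_eq_add_sum_ne G u, ← hsum, hinc]
  simp only [hdist, sum_add_distrib, add_comm]

end Soltes

/-! ### Gluing two graphs -/

section Glue

variable {V W : Type*} (G : SimpleGraph V) (H : SimpleGraph W) (r : V → W → Prop)

/-- The disjoint union of `G` and `H` together with an edge between `v` and `w` whenever
`r v w`. -/
def glue : SimpleGraph (V ⊕ W) where
  Adj
    | Sum.inl v, Sum.inl v' => G.Adj v v'
    | Sum.inl v, Sum.inr w => r v w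
    | Sum.inr w, Sum.inl v => r v w
    | Sum.inr w, Sum.inr w' => H.Adj w w'
  symm := ⟨by rintro (v | w) (v' | w') h <;> first | exact h.symm | exact h⟩
  loopless := ⟨by rintro (v | w) h <;> exact h.ne rfl⟩

variable {G H r}

@[simp]
theorem glue_adj_inl_inl {v v' : V} : (glue G H r).Adj (Sum.inl v) (Sum.inl v') ↔ G.Adj v v' :=
  Iff.rfl

@[simp]
theorem glue_adj_inl_inr {v : V} {w : W} : (glue G H r).Adj (Sum.inl v) (Sum.inr w) ↔ r v w :=
  Iff.rfl

@[simp]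
theorem glue_adj_inr_inl {v : V} {w : W} : (glue G H r).Adj (Sum.inr w) (Sum.inl v) ↔ r v w :=
  Iff.rfl

@[simp]
theorem glue_adj_inr_inr {w w' : W} : (glue G H r).Adj (Sum.inr w) (Sum.inr w') ↔ H.Adj w w' :=
  Iff.rfl

theorem ncard_sum_eq [Finite V] [Finite W] (s : Set (V ⊕ W)) :
    s.ncard = (Sum.inl ⁻¹' s).ncard + (Sum.inr ⁻¹' s).ncard := by
  rw [← Set.ncard_image_of_injective (Sum.inl ⁻¹' s) Sum.inl_injective,
    ← Set.ncard_image_of_injective (Sum.inr ⁻¹' s) Sum.inr_injective, ← Set.ncard_union_eq,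
    Set.image_preimage_inl_union_image_preimage_inr]
  exact Set.disjoint_image_inl_image_inr

theorem ncard_neighborSet_glue_inl [Finite V] [Finite W] (v : V) :
    ((glue G H r).neighborSet (Sum.inl v)).ncard =
      (G.neighborSet v).ncard + {w | r v w}.ncard :=
  ncard_sum_eq _

theorem ncard_neighborSet_glue_inr [Finite V] [Finite W] (w : W) :
    ((glue G H r).neighborSet (Sum.inr w)).ncard =
      {v | r v w}.ncard + (H.neighborSet w).ncard :=
  ncard_sum_eq _

end Glue

/-! ### Layered rings -/

section LayeredRing

variable {R K : Type*} {p : R → ℕ} {n m : ℕ} {C : SimpleGraph K} {z₁ z₂ : K}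

/-- `p` arranges `R` into the `n` nonempty layers `p ⁻¹' {0}, …, p ⁻¹' {n - 1}`. -/
structure IsLayering (p : R → ℕ) (n : ℕ) : Prop where
  lt : ∀ x, p x < n
  exists_eq : ∀ ⦃i⦄, i < n → ∃ x, p x = i

theorem IsLayering.reverse (h : IsLayering p n) : IsLayering (fun x => n - 1 - p x) n where
  lt x := by have := h.lt x; omega
  exists_eq i hi := by
    obtain ⟨x, hx⟩ := h.exists_eq (show n - 1 - i < n by omega)
    exact ⟨x, by omega⟩

/-- The graph in which distinct vertices are adjacent when their layers coincide or are
consecutive. -/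
def layerGraph (p : R → ℕ) : SimpleGraph R where
  Adj x y := x ≠ y ∧ p x ≤ p y + 1 ∧ p y ≤ p x + 1
  symm := ⟨fun _ _ h => ⟨h.1.symm, h.2.2, h.2.1⟩⟩
  loopless := ⟨fun _ h => h.1 rfl⟩

theorem layerGraph_adj {x y : R} :
    (layerGraph p).Adj x y ↔ x ≠ y ∧ p x ≤ p y + 1 ∧ p y ≤ p x + 1 :=
  Iff.rfl

theorem layerGraph_adj_of_eq_add_one {x y : R} (h : p y = p x + 1) : (layerGraph p).Adj x y :=
  ⟨by rintro rfl; omega, by omega, by omega⟩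

/-- The layer graph of `p`, closed up into a ring by `C`: the last of the `n` layers is joined to
`z₁` and layer `0` is joined to `z₂`. -/
abbrev layeredRing (p : R → ℕ) (n : ℕ) (C : SimpleGraph K) (z₁ z₂ : K) : SimpleGraph (R ⊕ K) :=
  glue (layerGraph p) C fun x k => (p x + 1 = n ∧ k = z₁) ∨ (p x = 0 ∧ k = z₂)

theorem layeredRing_reverse (h : IsLayering p n) :
    layeredRing (fun x => n - 1 - p x) n C z₂ z₁ = layeredRing p n C z₁ z₂ := by
  ext (x | k) (y | l)
  · have hx := h.lt x
    have hy := h.lt y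
    simp only [glue_adj_inl_inl, layerGraph_adj]
    exact and_congr_right fun _ => by omega
  · have hx := h.lt x
    simp only [glue_adj_inl_inr]
    grind
  · have hy := h.lt y
    simp only [glue_adj_inr_inl]
    grind
  · rfl

theorem IsLayering.isSTNumbering (h : IsLayering p n) (hz : z₂ ≠ z₁) {σ : K → ℕ}
    (hσ : IsSTNumbering C z₂ z₁ σ) :
    IsSTNumbering (layeredRing p n C z₁ z₂) (Sum.inr z₂) (Sum.inr z₁)
      (Sum.elim (fun x => (n + 1) * σ z₂ + 1 + p x) fun k => (n + 1) * σ k) where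
  exists_lt := by
    rintro (x | k) hx
    · rcases Nat.eq_zero_or_pos (p x) with h0 | hpos
      · exact ⟨Sum.inr z₂, Or.inr ⟨h0, rfl⟩, by simp [h0]⟩
      · obtain ⟨y, hy⟩ := h.exists_eq (show p x - 1 < n by have := h.lt x; omega)
        have hadj : (layerGraph p).Adj x y := (layerGraph_adj_of_eq_add_one (by omega)).symm
        exact ⟨Sum.inl y, hadj, by simp only [Sum.elim_inl]; omega⟩
    · obtain ⟨l, hadj, hlt⟩ := hσ.exists_lt fun hk => hx (congrArg Sum.inr hk)
      exact ⟨Sum.inr l, hadj, Nat.mul_lt_mul_of_pos_left hlt n.succ_pos⟩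
  exists_gt := by
    have hlast : (n + 1) * (σ z₂ + 1) ≤ (n + 1) * σ z₁ :=
      Nat.mul_le_mul_left _ (hσ.source_lt hz.symm)
    rintro (x | k) hx
    · rcases (Nat.succ_le_of_lt (h.lt x)).eq_or_lt with heq | hlt
      · refine ⟨Sum.inr z₁, Or.inl ⟨heq, rfl⟩, ?_⟩
        simp only [Sum.elim_inl, Sum.elim_inr]
        linarith
      · obtain ⟨y, hy⟩ := h.exists_eq hlt
        have hadj : (layerGraph p).Adj x y := layerGraph_adj_of_eq_add_one hy
        exact ⟨Sum.inl y, hadj, by simp only [Sum.elim_inl]; omega⟩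
    · obtain ⟨l, hadj, hlt⟩ := hσ.exists_gt fun hk => hx (congrArg Sum.inr hk)
      exact ⟨Sum.inr l, hadj, Nat.mul_lt_mul_of_pos_left hlt n.succ_pos⟩

/-- `v` lies at height `i` over `z₂`: it is `z₂` itself, or on layer `i - 1`. -/
def IsAtHeight (p : R → ℕ) (z₂ : K) : R ⊕ K → ℕ → Prop
  | Sum.inl x, i => p x + 1 = i
  | Sum.inr k, i => k = z₂ ∧ i = 0

theorem IsAtHeight.eq_or_adj {v w : R ⊕ K} {i j : ℕ} (hv : IsAtHeight p z₂ v i)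
    (hw : IsAtHeight p z₂ w j) (hij : i ≤ j + 1) (hji : j ≤ i + 1) :
    v = w ∨ (layeredRing p n C z₁ z₂).Adj v w := by
  rcases v with x | k <;> rcases w with y | l <;> simp only [IsAtHeight] at hv hw
  · exact or_iff_not_imp_left.2 fun hne => ⟨fun hxy => hne (congrArg _ hxy), by omega, by omega⟩
  · exact Or.inr (Or.inr ⟨by omega, hw.1⟩)
  · exact Or.inr (Or.inr ⟨by omega, hv.1⟩)
  · exact Or.inl (congrArg _ (hv.1.trans hw.1.symm))

/-- Reflecting the layers from `m` on at layer `m - 1` retracts the ring onto its layers before `m`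
together with `C`; what the reflection pushes beyond layer `0` collapses to `z₂`. -/
theorem IsLayering.exists_fold (h : IsLayering p n) (hm : 2 * m ≤ n) (hz : C.Adj z₁ z₂) :
    ∃ f : R ⊕ K → R ⊕ K, (∀ k, f (Sum.inr k) = Sum.inr k) ∧
      (∀ x, p x < m → f (Sum.inl x) = Sum.inl x) ∧ (∀ v x, f v = Sum.inl x → p x < m) ∧
      ∀ ⦃v w⦄, (layeredRing p n C z₁ z₂).Adj v w →
        f v = f w ∨ (layeredRing p n C z₁ z₂).Adj (f v) (f w) := by
  choose rep hrep using h.exists_eq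
  let f : R ⊕ K → R ⊕ K := Sum.elim
    (fun x => if p x < m then Sum.inl x else
      if hx : p x + 2 ≤ 2 * m then Sum.inl (rep (i := 2 * m - 2 - p x) (by omega)) else Sum.inr z₂)
    Sum.inr
  have hf : ∀ x, IsAtHeight p z₂ (f (Sum.inl x)) (min (p x + 1) (2 * m - 1 - p x)) := fun x => by
    simp only [f, Sum.elim_inl]
    split_ifs with hlow hhigh <;> simp only [IsAtHeight, hrep, true_and] <;> omega
  have hend : ∀ x k, (p x + 1 = n ∧ k = z₁) ∨ (p x = 0 ∧ k = z₂) →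
      f (Sum.inl x) = Sum.inr k ∨ (layeredRing p n C z₁ z₂).Adj (f (Sum.inl x)) (Sum.inr k) := by
    rintro x k (⟨hx, rfl⟩ | ⟨hx, rfl⟩)
    · have hlast : f (Sum.inl x) = Sum.inr z₂ := by
        simp only [f, Sum.elim_inl]
        rw [if_neg (by omega), dif_neg (by omega)]
      exact Or.inr (hlast ▸ hz.symm)
    · exact (hf x).eq_or_adj (j := 0) ⟨rfl, rfl⟩ (by omega) (by omega)
  refine ⟨f, fun _ => rfl, fun x hx => if_pos hx, ?_, ?_⟩
  · rintro (x | k) y hy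
    · have := hf x
      simp only [hy, IsAtHeight] at this
      omega
    · exact absurd hy Sum.inr_ne_inl
  · rintro (x | k) (y | l) hadj
    · obtain ⟨-, hxy, hyx⟩ := hadj
      exact (hf x).eq_or_adj (hf y) (by omega) (by omega)
    · exact hend x l hadj
    · exact (hend y k hadj).imp Eq.symm SimpleGraph.Adj.symm
    · exact Or.inr hadj

theorem IsLayering.dist_deleteVertex_eq_of_lt (h : IsLayering p n) (hm : 2 * m ≤ n)
    (hz : C.Adj z₁ z₂) {u : R} (hu : p u = m)
    (hconn : (deleteVertex (layeredRing p n C z₁ z₂) (Sum.inl u)).Connected)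
    {v w : {v : R ⊕ K // v ≠ Sum.inl u}} (hv : ∀ x, v.1 = Sum.inl x → p x < m)
    (hw : ∀ x, w.1 = Sum.inl x → p x < m) :
    (deleteVertex (layeredRing p n C z₁ z₂) (Sum.inl u)).dist v w =
      (layeredRing p n C z₁ z₂).dist v w := by
  obtain ⟨f, hfK, hlow, himage, hf⟩ := h.exists_fold hm hz
  have hfix : ∀ v : R ⊕ K, (∀ x, v = Sum.inl x → p x < m) → f v = v := by
    rintro (x | k) hv
    exacts [hlow x (hv x rfl), hfK k]
  exact dist_deleteVertex_eq_of_retraction hconn hf (fun v hv => (himage v u hv).ne hu)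
    (hfix v hv) (hfix w hw)

theorem IsLayering.dist_deleteVertex_eq_of_gt (h : IsLayering p n) (hm : n ≤ 2 * m + 2)
    (hz : C.Adj z₁ z₂) {u : R} (hu : p u = m)
    (hconn : (deleteVertex (layeredRing p n C z₁ z₂) (Sum.inl u)).Connected)
    {v w : {v : R ⊕ K // v ≠ Sum.inl u}} (hv : ∀ x, v.1 = Sum.inl x → m < p x)
    (hw : ∀ x, w.1 = Sum.inl x → m < p x) :
    (deleteVertex (layeredRing p n C z₁ z₂) (Sum.inl u)).dist v w =
      (layeredRing p n C z₁ z₂).dist v w := by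
  have hun := h.lt u
  rw [← layeredRing_reverse h] at hconn ⊢
  refine h.reverse.dist_deleteVertex_eq_of_lt (m := n - 1 - m) (by omega) hz.symm (by rw [hu]) hconn
    (fun x hx => ?_) fun x hx => ?_
  · have := hv x hx
    have := h.lt x
    omega
  · have := hw x hx
    have := h.lt x
    omega

/-- The position of a vertex on the cycle of length `n + 2` formed by the layers, `z₁` and `z₂`;
the rest of `C` is placed at `z₁`. -/
def cyclePos [DecidableEq K] (p : R → ℕ) (n : ℕ) (z₂ : K) : R ⊕ K → ℕ :=
  Sum.elim p fun k => if k = z₂ then n + 1 else n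

theorem cyclePos_of_adj [DecidableEq K] (hz : z₁ ≠ z₂) ⦃v w : R ⊕ K⦄
    (hadj : (layeredRing p n C z₁ z₂).Adj v w) :
    (cyclePos p n z₂ v ≤ cyclePos p n z₂ w + 1 ∧ cyclePos p n z₂ w ≤ cyclePos p n z₂ v + 1) ∨
      (cyclePos p n z₂ v = 0 ∧ cyclePos p n z₂ w = n + 1) ∨
      (cyclePos p n z₂ v = n + 1 ∧ cyclePos p n z₂ w = 0) := by
  rcases v with x | k <;> rcases w with y | l
  · exact Or.inl hadj.2
  · rcases hadj with ⟨hx, rfl⟩ | ⟨hx, rfl⟩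
    · exact Or.inl (by simp only [cyclePos, Sum.elim_inl, Sum.elim_inr, if_neg hz]; omega)
    · exact Or.inr (Or.inl ⟨hx, if_pos rfl⟩)
  · rcases hadj with ⟨hy, rfl⟩ | ⟨hy, rfl⟩
    · exact Or.inl (by simp only [cyclePos, Sum.elim_inl, Sum.elim_inr, if_neg hz]; omega)
    · exact Or.inr (Or.inr ⟨if_pos rfl, hy⟩)
  · left
    simp only [cyclePos, Sum.elim_inr]
    split_ifs <;> omega

theorem IsLayering.min_le_dist (h : IsLayering p n) (hz : z₁ ≠ z₂)
    (hconn : (layeredRing p n C z₁ z₂).Connected) {x y : R} (hxy : p x ≤ p y) :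
    min (p y - p x) (n + 2 - (p y - p x)) ≤
      (layeredRing p n C z₁ z₂).dist (Sum.inl x) (Sum.inl y) := by
  classical
  let offset (v : R ⊕ K) : ℕ := (cyclePos p n z₂ v - p x) + (p x - cyclePos p n z₂ v)
  have hx := h.lt x
  have hlip := le_add_dist_of_lipschitz (F := fun v => min (offset v) (n + 2 - offset v))
    (fun v w hadj => by have := cyclePos_of_adj hz hadj; simp only [offset]; omega)
    (hconn (Sum.inl x) (Sum.inl y))
  simp only [offset, cyclePos, Sum.elim_inl] at hlip
  omega

theorem IsLayering.dist_le_sub (h : IsLayering p n) (hconn : (layeredRing p n C z₁ z₂).Connected)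
    {x y : R} (hxy : p x < p y) :
    (layeredRing p n C z₁ z₂).dist (Sum.inl x) (Sum.inl y) ≤ p y - p x := by
  induction hk : p y - p x generalizing x with
  | zero => omega
  | succ k ih =>
    obtain ⟨z, hz⟩ := h.exists_eq (show p x + 1 < n by have := h.lt y; omega)
    have hstep {w : R} (hw : p w = p x + 1) :
        (layeredRing p n C z₁ z₂).dist (Sum.inl x) (Sum.inl w) = 1 :=
      dist_eq_one_iff_adj.2 (layerGraph_adj_of_eq_add_one hw)
    rcases (show p x + 1 ≤ p y by omega).eq_or_lt with heq | hlt
    · exact (hstep heq.symm).trans_le (by omega)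
    · have htri := hconn.dist_triangle (u := Sum.inl x) (v := Sum.inl z) (w := Sum.inl y)
      have := ih (x := z) (by omega) (by omega)
      have := hstep hz
      omega

theorem IsLayering.dist_inr_le (h : IsLayering p n) (hconn : (layeredRing p n C z₁ z₂).Connected)
    (x : R) : (layeredRing p n C z₁ z₂).dist (Sum.inl x) (Sum.inr z₂) ≤ p x + 1 := by
  induction hi : p x generalizing x with
  | zero => exact (dist_eq_one_iff_adj.2 (Or.inr ⟨hi, rfl⟩)).le
  | succ i ih =>
    obtain ⟨y, hy⟩ := h.exists_eq (show i < n by have := h.lt x; omega)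
    have hadj : (layerGraph p).Adj x y := (layerGraph_adj_of_eq_add_one (by omega)).symm
    have hxy : (layeredRing p n C z₁ z₂).dist (Sum.inl x) (Sum.inl y) = 1 :=
      dist_eq_one_iff_adj.2 hadj
    have htri := hconn.dist_triangle (u := Sum.inl x) (v := Sum.inl y) (w := Sum.inr z₂)
    have := ih y hy
    omega

/-- The position along the path `m + 1, …, n + 1, n + 2, …, n + 1 + m` into which the cycle of
`cyclePos` opens up when position `m` is removed. -/
def openedPos [DecidableEq K] (p : R → ℕ) (n : ℕ) (z₂ : K) (m : ℕ) (v : R ⊕ K) : ℕ :=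
  if cyclePos p n z₂ v < m then cyclePos p n z₂ v + (n + 2) else cyclePos p n z₂ v

theorem IsLayering.le_dist_deleteVertex [DecidableEq K] (h : IsLayering p n) (hz : z₁ ≠ z₂) {u : R}
    (huniq : ∀ x, p x = p u → x = u)
    (hconn : (deleteVertex (layeredRing p n C z₁ z₂) (Sum.inl u)).Connected)
    (v w : {v : R ⊕ K // v ≠ Sum.inl u}) :
    openedPos p n z₂ (p u) w ≤ openedPos p n z₂ (p u) v +
      (deleteVertex (layeredRing p n C z₁ z₂) (Sum.inl u)).dist v w := by
  have hne : ∀ v : {v : R ⊕ K // v ≠ Sum.inl u}, cyclePos p n z₂ v ≠ p u := by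
    have hun := h.lt u
    rintro ⟨x | k, hx⟩ heq
    · exact hx (congrArg _ (huniq x heq))
    · simp only [cyclePos, Sum.elim_inr] at heq
      split_ifs at heq <;> omega
  refine le_add_dist_of_lipschitz (F := fun v => openedPos p n z₂ (p u) v.1)
    (fun v w hadj => ?_) (hconn v w)
  have hv := hne v
  have hw := hne w
  have hun := h.lt u
  have := cyclePos_of_adj hz (deleteVertex_adj.1 hadj)
  simp only [openedPos]
  split_ifs <;> omega

/-- Without `u` in layer `m`, a vertex before `u` and one behind it are joined through `C` only. -/
theorem IsLayering.dist_deleteVertex_inl (h : IsLayering p n) (hm : 2 * m ≤ n) (hm' : n ≤ 2 * m + 2)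
    (hz : C.Adj z₁ z₂) {u : R} (hu : p u = m) (huniq : ∀ x, p x = p u → x = u)
    (hconn : (deleteVertex (layeredRing p n C z₁ z₂) (Sum.inl u)).Connected)
    (hconn' : (layeredRing p n C z₁ z₂).Connected) {x y : R} (hxu : p x < m) (huy : m < p y)
    (hx : Sum.inl x ≠ Sum.inl u) (hy : Sum.inl y ≠ Sum.inl u) :
    (deleteVertex (layeredRing p n C z₁ z₂) (Sum.inl u)).dist ⟨Sum.inl x, hx⟩ ⟨Sum.inl y, hy⟩ =
      n + 2 - (p y - p x) := by
  classical
  have hyn := h.lt y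
  refine le_antisymm ?_ ?_
  · have hz₁ : (layeredRing p n C z₁ z₂).dist (Sum.inl y) (Sum.inr z₁) ≤ n - 1 - p y + 1 := by
      have := h.reverse.dist_inr_le ((layeredRing_reverse h).symm ▸ hconn') y
      rwa [layeredRing_reverse h] at this
    have hxz₂ := (h.dist_deleteVertex_eq_of_lt hm hz hu hconn (v := ⟨Sum.inl x, hx⟩)
      (w := ⟨Sum.inr z₂, Sum.inr_ne_inl⟩) (by simpa) (by simp)).trans_le (h.dist_inr_le hconn' x)
    have hyz₁ := (h.dist_deleteVertex_eq_of_gt hm' hz hu hconn (v := ⟨Sum.inl y, hy⟩)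
      (w := ⟨Sum.inr z₁, Sum.inr_ne_inl⟩) (by simpa) (by simp)).trans_le hz₁
    have hz₁₂ : (deleteVertex (layeredRing p n C z₁ z₂) (Sum.inl u)).dist
        ⟨Sum.inr z₂, Sum.inr_ne_inl⟩ ⟨Sum.inr z₁, Sum.inr_ne_inl⟩ = 1 :=
      dist_eq_one_iff_adj.2 hz.symm
    have htri := hconn.dist_triangle (u := ⟨Sum.inl x, hx⟩) (v := ⟨Sum.inr z₂, Sum.inr_ne_inl⟩)
      (w := ⟨Sum.inl y, hy⟩)
    have htri' := hconn.dist_triangle (u := ⟨Sum.inr z₂, Sum.inr_ne_inl⟩)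
      (v := ⟨Sum.inr z₁, Sum.inr_ne_inl⟩) (w := ⟨Sum.inl y, hy⟩)
    have hcomm : (deleteVertex (layeredRing p n C z₁ z₂) (Sum.inl u)).dist
        ⟨Sum.inr z₁, Sum.inr_ne_inl⟩ ⟨Sum.inl y, hy⟩ = _ := SimpleGraph.dist_comm
    omega
  · have := h.le_dist_deleteVertex hz.ne huniq hconn ⟨Sum.inl y, hy⟩ ⟨Sum.inl x, hx⟩
    rw [SimpleGraph.dist_comm]
    simp only [openedPos, cyclePos, Sum.elim_inl, hu, if_pos hxu, if_neg huy.not_gt] at this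
    omega

/-- By how much deleting the only vertex of layer `m` lengthens the distance from layer `i` to
layer `j`, if `i ≤ j`. -/
def detour (n m i j : ℕ) : ℕ :=
  if i < m ∧ m < j then n + 2 - 2 * (j - i) else 0

/-- `detour` for two vertices of the ring in either order. -/
def ringDetour (p : R → ℕ) (n m : ℕ) : R ⊕ K → R ⊕ K → ℕ
  | Sum.inl x, Sum.inl y => detour n m (p x) (p y) + detour n m (p y) (p x)
  | _, _ => 0

theorem IsLayering.dist_deleteVertex_inl_inl (h : IsLayering p n) (hm : 2 * m ≤ n)
    (hm' : n ≤ 2 * m + 2) (hz : C.Adj z₁ z₂) {u : R} (hu : p u = m)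
    (huniq : ∀ x, p x = p u → x = u)
    (hconn : (deleteVertex (layeredRing p n C z₁ z₂) (Sum.inl u)).Connected)
    (hconn' : (layeredRing p n C z₁ z₂).Connected) {x y : R} (hxu : p x < m) (huy : m < p y)
    (hx : Sum.inl x ≠ Sum.inl u) (hy : Sum.inl y ≠ Sum.inl u) :
    (deleteVertex (layeredRing p n C z₁ z₂) (Sum.inl u)).dist ⟨Sum.inl x, hx⟩ ⟨Sum.inl y, hy⟩ =
      (layeredRing p n C z₁ z₂).dist (Sum.inl x) (Sum.inl y) + detour n m (p x) (p y) := by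
  have hcross := h.dist_deleteVertex_inl hm hm' hz hu huniq hconn hconn' hxu huy hx hy
  have hle : (layeredRing p n C z₁ z₂).dist (Sum.inl x) (Sum.inl y) ≤ _ :=
    dist_le_dist_deleteVertex hconn ⟨Sum.inl x, hx⟩ ⟨Sum.inl y, hy⟩
  have hge := h.min_le_dist hz.ne hconn' (hxu.trans huy).le
  have hsub := h.dist_le_sub hconn' (hxu.trans huy)
  have hyn := h.lt y
  simp only [detour, if_pos (And.intro hxu huy)]
  omega

theorem IsLayering.dist_deleteVertex (h : IsLayering p n) (hm : 2 * m ≤ n)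
    (hm' : n ≤ 2 * m + 2) (hz : C.Adj z₁ z₂) {u : R} (hu : p u = m) (huniq : ∀ x, p x = p u → x = u)
    (hconn : (deleteVertex (layeredRing p n C z₁ z₂) (Sum.inl u)).Connected)
    (hconn' : (layeredRing p n C z₁ z₂).Connected) (v w : {v : R ⊕ K // v ≠ Sum.inl u}) :
    (deleteVertex (layeredRing p n C z₁ z₂) (Sum.inl u)).dist v w =
      (layeredRing p n C z₁ z₂).dist v w + ringDetour p n m v.1 w.1 := by
  have hne : ∀ x, Sum.inl x ≠ (Sum.inl u : R ⊕ K) → p x < m ∨ m < p x := fun x hx =>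
    lt_or_gt_of_ne fun heq => hx (congrArg Sum.inl (huniq x (heq.trans hu.symm)))
  have hlow {v w : {v : R ⊕ K // v ≠ Sum.inl u}} := h.dist_deleteVertex_eq_of_lt hm hz hu hconn
    (v := v) (w := w)
  have hhigh {v w : {v : R ⊕ K // v ≠ Sum.inl u}} := h.dist_deleteVertex_eq_of_gt hm' hz hu hconn
    (v := v) (w := w)
  obtain ⟨x | k, hv⟩ := v <;> obtain ⟨y | l, hw⟩ := w
  · simp only [ringDetour]
    rcases hne x hv with hx | hx <;> rcases hne y hw with hy | hy
    · rw [hlow (by simpa) (by simpa), detour, detour, if_neg (by omega), if_neg (by omega)]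
      rfl
    · rw [h.dist_deleteVertex_inl_inl hm hm' hz hu huniq hconn hconn' hx hy,
        detour.eq_def n m (p y), if_neg (by omega), add_zero]
    · rw [SimpleGraph.dist_comm, h.dist_deleteVertex_inl_inl hm hm' hz hu huniq hconn hconn' hy hx,
        detour.eq_def n m (p x), if_neg (by omega), zero_add, SimpleGraph.dist_comm]
    · rw [hhigh (by simpa) (by simpa), detour, detour, if_neg (by omega), if_neg (by omega)]
      rfl
  · rcases hne x hv with hx | hx
    · exact hlow (by simpa) (by simp)
    · exact hhigh (by simpa) (by simp)
  · rcases hne y hw with hy | hy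
    · exact hlow (by simp) (by simpa)
    · exact hhigh (by simp) (by simpa)
  · exact hlow (by simp) (by simp)

theorem IsLayering.isDistanceTo (h : IsLayering p n) (hn : n = 2 * m + 2) (hz : C.Adj z₁ z₂)
    {d : K → ℕ} (hd : IsDistanceTo C {z₂} d) {u : R} (hu : p u = m)
    (huniq : ∀ x, p x = p u → x = u) :
    IsDistanceTo (layeredRing p n C z₁ z₂) {Sum.inl u}
      (Sum.elim (fun x => (p x - m) + (m - p x)) fun k => m + 1 + d k) := by
  have hdz₂ : d z₂ = 0 := hd.eq_zero rfl
  have hdz₁ : d z₁ = 1 := by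
    obtain ⟨y, -, hy⟩ := hd.exists_adj (show z₁ ∉ {z₂} from hz.ne)
    have := hd.le_add_one hz.symm
    omega
  refine ⟨?_, ?_, ?_⟩
  · rintro _ rfl
    simp only [Sum.elim_inl]
    omega
  · rintro (x | k) (y | l) hadj
    · obtain ⟨-, hxy⟩ := hadj
      simp only [Sum.elim_inl]
      omega
    · simp only [Sum.elim_inl, Sum.elim_inr]
      rcases hadj with ⟨hx, rfl⟩ | ⟨hx, rfl⟩ <;> omega
    · simp only [Sum.elim_inl, Sum.elim_inr]
      rcases hadj with ⟨hx, rfl⟩ | ⟨hx, rfl⟩ <;> omega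
    · have := hd.le_add_one hadj
      simp only [Sum.elim_inr]
      omega
  · rintro (x | k) hx
    · have hne : p x ≠ m := fun heq => hx (congrArg Sum.inl (huniq x (heq.trans hu.symm)))
      rcases hne.lt_or_gt with hlt | hgt
      · obtain ⟨y, hy⟩ := h.exists_eq (show p x + 1 < n by omega)
        exact ⟨Sum.inl y, layerGraph_adj_of_eq_add_one hy, by simp only [Sum.elim_inl]; omega⟩
      · obtain ⟨y, hy⟩ := h.exists_eq (show p x - 1 < n by have := h.lt x; omega)
        have hadj : (layerGraph p).Adj y x := layerGraph_adj_of_eq_add_one (by omega)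
        exact ⟨Sum.inl y, hadj.symm, by simp only [Sum.elim_inl]; omega⟩
    · by_cases hk : k = z₂
      · obtain ⟨y, hy⟩ := h.exists_eq (show 0 < n by omega)
        refine ⟨Sum.inl y, Or.inr ⟨hy, hk⟩, ?_⟩
        simp only [Sum.elim_inl, Sum.elim_inr, hk]
        omega
      · obtain ⟨l, hadj, hl⟩ := hd.exists_adj hk
        exact ⟨Sum.inr l, hadj, by simp only [Sum.elim_inr]; omega⟩

/-- Deleting `u` saves the distances from `u` and costs the detours; `u` is a Šoltés vertex once
the two balance. -/
theorem IsLayering.isSoltes [Fintype R] [Fintype K] (h : IsLayering p n)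
    (hn : n = 2 * m + 2) (hz : C.Adj z₁ z₂) {σ : K → ℕ} (hσ : IsSTNumbering C z₂ z₁ σ) {d : K → ℕ}
    (hd : IsDistanceTo C {z₂} d) {u : R} (hu : p u = m) (huniq : ∀ x, p x = p u → x = u)
    (hsum : ∑ x, ∑ y, detour n m (p x) (p y) =
      ∑ x, ((p x - m) + (m - p x)) + ∑ k, (m + 1 + d k)) :
    IsSoltes (layeredRing p n C z₁ z₂) (Sum.inl u) := by
  have hst := h.isSTNumbering hz.ne' hσ
  have hconn := hst.deleteVertex_connected hz.symm (Sum.inl u)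
  refine isSoltes_of_dist_deleteVertex_eq_add hconn (inc := ringDetour p n m)
    ?_ ?_ (h.dist_deleteVertex (by omega) hn.le hz hu huniq hconn hst.connected) ?_
  · rintro (y | _) <;> simp [ringDetour, detour, hu]
  · rintro (x | _) <;> simp [ringDetour, detour, hu]
  · have hswap : ∑ x, ∑ y, detour n m (p y) (p x) =
        ∑ x, ∑ y, detour n m (p x) (p y) := sum_comm
    simp only [(h.isDistanceTo hn hz hd hu huniq).dist_eq, Fintype.sum_sum_type, ringDetour,
      Sum.elim_inl, Sum.elim_inr, sum_const_zero, add_zero, sum_add_distrib, hswap] at hsum ⊢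
    linarith

end LayeredRing

/-! ### Rings of diamonds -/

section Diamonds

variable {K : Type*} {C : SimpleGraph K} {z₁ z₂ : K}

/-- The layers of a chain of `N` diamonds: the diamond `j` has its vertex `0` in layer `3 * j`,
`2` and `3` in layer `3 * j + 1`, and `1` in layer `3 * j + 2`. -/
def diamondPos (N : ℕ) (x : Fin N × Fin 4) : ℕ :=
  3 * x.1 + ![0, 2, 1, 1] x.2

theorem isLayering_diamondPos (N : ℕ) : IsLayering (diamondPos N) (3 * N) where
  lt := by
    rintro ⟨j, a⟩
    fin_cases a <;> simp [diamondPos] <;> omega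
  exists_eq i hi := by
    obtain h | h | h : i % 3 = 0 ∨ i % 3 = 1 ∨ i % 3 = 2 := by omega
    · exact ⟨(⟨i / 3, by omega⟩, 0), by simp [diamondPos]; omega⟩
    · exact ⟨(⟨i / 3, by omega⟩, 2), by simp [diamondPos]; omega⟩
    · exact ⟨(⟨i / 3, by omega⟩, 1), by simp [diamondPos]; omega⟩

theorem diamondPos_eq_three_mul_iff {N : ℕ} {x : Fin N × Fin 4} {j : Fin N} :
    diamondPos N x = 3 * j ↔ x = (j, 0) := by
  obtain ⟨k, a⟩ := x
  fin_cases a <;> simp [diamondPos, Fin.ext_iff] <;> omega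

theorem diamondPos_eq_three_mul_add_two_iff {N : ℕ} {x : Fin N × Fin 4} {j : Fin N} :
    diamondPos N x = 3 * j + 2 ↔ x = (j, 1) := by
  obtain ⟨k, a⟩ := x
  fin_cases a <;> simp [diamondPos, Fin.ext_iff] <;> omega

theorem gtGraph_adj_inl_inl {t : ℕ} {x y : Fin (2 * t) × Fin 4} :
    (GtGraph t).Adj (Sum.inl x) (Sum.inl y) ↔ (layerGraph (diamondPos (2 * t))).Adj x y := by
  obtain ⟨j, a⟩ := x
  obtain ⟨k, b⟩ := y
  fin_cases a <;> fin_cases b <;>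
    simp [GtGraph, gtRel, diamondRel, layerGraph_adj, diamondPos, Fin.ext_iff] <;> omega

theorem ncard_neighborSet_diamondRing {N : ℕ} (x : Fin N × Fin 4) :
    ((layeredRing (diamondPos N) (3 * N) C z₁ z₂).neighborSet (Sum.inl x)).ncard = 3 := by
  obtain ⟨j, a⟩ := x
  rw [Set.ncard_eq_three]
  fin_cases a
  · by_cases hj : (j : ℕ) = 0
    · refine ⟨Sum.inl (j, 2), Sum.inl (j, 3), Sum.inr z₂, by simp, by simp, by simp, ?_⟩
      ext (⟨k, b⟩ | k)
      · fin_cases b <;> simp [layerGraph_adj, diamondPos, Fin.ext_iff] <;> omega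
      · simp [diamondPos, hj]; omega
    · refine ⟨Sum.inl (j, 2), Sum.inl (j, 3), Sum.inl (⟨j - 1, by omega⟩, 1),
        by simp, by simp, by simp, ?_⟩
      ext (⟨k, b⟩ | k)
      · fin_cases b <;> simp [layerGraph_adj, diamondPos, Fin.ext_iff] <;> omega
      · simp [diamondPos]; omega
  · by_cases hj : (j : ℕ) + 1 = N
    · refine ⟨Sum.inl (j, 2), Sum.inl (j, 3), Sum.inr z₁, by simp, by simp, by simp, ?_⟩
      ext (⟨k, b⟩ | k)
      · fin_cases b <;> simp [layerGraph_adj, diamondPos, Fin.ext_iff] <;> omega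
      · simp [diamondPos]; omega
    · refine ⟨Sum.inl (j, 2), Sum.inl (j, 3), Sum.inl (⟨j + 1, by omega⟩, 0),
        by simp, by simp, by simp, ?_⟩
      ext (⟨k, b⟩ | k)
      · fin_cases b <;> simp [layerGraph_adj, diamondPos, Fin.ext_iff] <;> omega
      · simp [diamondPos]; omega
  · refine ⟨Sum.inl (j, 0), Sum.inl (j, 1), Sum.inl (j, 3), by simp, by simp, by simp, ?_⟩
    ext (⟨k, b⟩ | k)
    · fin_cases b <;> simp [layerGraph_adj, diamondPos, Fin.ext_iff] <;> omega
    · simp [diamondPos]; omega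
  · refine ⟨Sum.inl (j, 0), Sum.inl (j, 1), Sum.inl (j, 2), by simp, by simp, by simp, ?_⟩
    ext (⟨k, b⟩ | k)
    · fin_cases b <;> simp [layerGraph_adj, diamondPos, Fin.ext_iff] <;> omega
    · simp [diamondPos]; omega

theorem sum_diamondPos (N : ℕ) (F : ℕ → ℕ) :
    ∑ x, F (diamondPos N x) =
      ∑ j ∈ range N, (F (3 * j) + 2 * F (3 * j + 1) + F (3 * j + 2)) := by
  rw [Fintype.sum_prod_type, Finset.sum_range]
  refine sum_congr rfl fun j _ => ?_
  simp only [Fin.sum_univ_four, diamondPos]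
  simp
  ring

theorem sum_diamondPos_reverse (N : ℕ) (F : ℕ → ℕ) :
    ∑ x, F (3 * N - 1 - diamondPos N x) = ∑ x, F (diamondPos N x) := by
  rw [← (Fin.revPerm.prodCongr (Equiv.swap (0 : Fin 4) 1)).sum_comp fun x => F (diamondPos N x)]
  refine sum_congr rfl ?_
  rintro ⟨j, a⟩ -
  congr 1
  fin_cases a <;> simp [diamondPos, Equiv.swap_apply_def] <;> omega

theorem sum_detour_diamondPos {m t i : ℕ} (hm : m + 1 = 3 * t) (hi : i < m) :
    ∑ y, detour (3 * (2 * t)) m i (diamondPos (2 * t) y) =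
      ∑ l ∈ range t, ((2 * i + 2 - 6 * l) + 2 * (2 * i - 6 * l) + (2 * i - 2 - 6 * l)) := by
  rw [sum_diamondPos, two_mul, sum_range_add, sum_eq_zero fun j hj => ?_, zero_add]
  · refine sum_congr rfl fun l _ => ?_
    simp only [detour]
    rw [if_pos (by omega), if_pos (by omega), if_pos (by omega)]
    omega
  · rw [mem_range] at hj
    simp only [detour]
    rw [if_neg (by omega), if_neg (by omega), if_neg (by omega)]
    rfl

theorem sum_range_sub_diamond {o k t : ℕ} (ho : o < 3) (hk : k < t) :
    ∑ l ∈ range t, ((2 * (3 * k + o) + 2 - 6 * l) + 2 * (2 * (3 * k + o) - 6 * l) +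
      (2 * (3 * k + o) - 2 - 6 * l)) = (12 * k + 8 * o) * (k + 1) + (2 - 2 * o) := by
  induction k generalizing t with
  | zero =>
    obtain ⟨t, rfl⟩ : ∃ s, t = s + 1 := ⟨t - 1, by omega⟩
    rw [sum_range_succ', sum_eq_zero fun l _ => by omega]
    omega
  | succ k ih =>
    obtain ⟨t, rfl⟩ : ∃ s, t = s + 1 := ⟨t - 1, by omega⟩
    have hshift : ∀ l, (2 * (3 * (k + 1) + o) + 2 - 6 * (l + 1)) +
        2 * (2 * (3 * (k + 1) + o) - 6 * (l + 1)) + (2 * (3 * (k + 1) + o) - 2 - 6 * (l + 1)) =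
        (2 * (3 * k + o) + 2 - 6 * l) + 2 * (2 * (3 * k + o) - 6 * l) +
          (2 * (3 * k + o) - 2 - 6 * l) := fun l => by omega
    simp only [sum_range_succ', hshift, ih (Nat.lt_of_succ_lt_succ hk)]
    have : 2 * (3 * (k + 1) + o) - 2 = 6 * k + 4 + 2 * o := by omega
    simp only [this, mul_zero, Nat.sub_zero]
    ring

theorem sum_sum_detour_diamondPos {m t : ℕ} (hm : m + 1 = 3 * t) :
    ∑ x, ∑ y, detour (3 * (2 * t)) m (diamondPos (2 * t) x) (diamondPos (2 * t) y) + 2 * t =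
      16 * t ^ 3 + 4 * t ^ 2 := by
  obtain ⟨s, rfl⟩ : ∃ s, t = s + 1 := ⟨t - 1, by omega⟩
  let row (i : ℕ) : ℕ := ∑ y, detour (3 * (2 * (s + 1))) m i (diamondPos (2 * (s + 1)) y)
  have hrow (k o : ℕ) (hk : k ≤ s) (ho : o < 3) (hlt : 3 * k + o < m) :
      row (3 * k + o) = (12 * k + 8 * o) * (k + 1) + (2 - 2 * o) := by
    rw [← sum_range_sub_diamond ho (Nat.lt_succ_of_le hk), ← sum_detour_diamondPos hm hlt]
  have hzero {i : ℕ} (hi : m ≤ i) : row i = 0 :=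
    sum_eq_zero fun y _ => if_neg fun h => h.1.not_ge hi
  have hlow : ∀ k ≤ s, ∑ j ∈ range k, (row (3 * j) + 2 * row (3 * j + 1) + row (3 * j + 2)) =
      16 * k ^ 3 + 16 * k ^ 2 + 2 * k := fun k hk => by
    induction k with
    | zero => rfl
    | succ k ih =>
      rw [sum_range_succ, ih (by omega), hrow k 1 (by omega) (by omega) (by omega),
        hrow k 2 (by omega) (by omega) (by omega), show row (3 * k) = _ from
          hrow k 0 (by omega) (by omega) (by omega)]
      ring
  have hhigh : ∑ l ∈ range (s + 1), (row (3 * (s + 1 + l)) + 2 * row (3 * (s + 1 + l) + 1) +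
      row (3 * (s + 1 + l) + 2)) = 0 :=
    sum_eq_zero fun l _ => by
      simp only [hzero (i := 3 * (s + 1 + l)) (by omega), hzero (i := 3 * (s + 1 + l) + 1)
        (by omega), hzero (i := 3 * (s + 1 + l) + 2) (by omega)]
      rfl
  rw [sum_diamondPos _ row, two_mul, sum_range_add, hhigh, sum_range_succ, hlow s le_rfl,
    hzero (i := 3 * s + 2) (by omega), hrow s 1 le_rfl (by omega) (by omega),
    show row (3 * s) = _ from hrow s 0 le_rfl (by omega) (by omega)]
  ring

theorem sum_dist_diamondPos {m t : ℕ} (hm : m + 1 = 3 * t) :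
    ∑ x, ((diamondPos (2 * t) x - m) + (m - diamondPos (2 * t) x)) = 12 * t ^ 2 := by
  have hlow : ∀ j ∈ range t, ((3 * j - m) + (m - 3 * j)) + 2 * ((3 * j + 1 - m) +
      (m - (3 * j + 1))) + ((3 * j + 2 - m) + (m - (3 * j + 2))) = 12 * (t - 1 - j) + 4 :=
    fun j hj => by
      rw [mem_range] at hj
      omega
  have hhigh : ∀ l, ((3 * (t + l) - m) + (m - 3 * (t + l))) + 2 * ((3 * (t + l) + 1 - m) +
      (m - (3 * (t + l) + 1))) + ((3 * (t + l) + 2 - m) + (m - (3 * (t + l) + 2))) =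
      12 * l + 8 := fun l => by omega
  rw [sum_diamondPos _ fun i => (i - m) + (m - i), two_mul, sum_range_add, sum_congr rfl hlow,
    sum_range_reflect fun j => 12 * j + 4]
  simp only [hhigh]
  have htotal : ∀ t, ∑ j ∈ range t, (12 * j + 4) + ∑ l ∈ range t, (12 * l + 8) = 12 * t ^ 2 :=
    fun t => by
      induction t with
      | zero => rfl
      | succ t ih => rw [sum_range_succ, sum_range_succ]; linarith
  exact htotal t

end Diamonds

/-! ### Closing the ring by a plug -/

section Plug

variable {Y : Type*} {P : SimpleGraph Y} {v₁ v₂ : Y} {δ : Y → ℕ}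

/-- `P` is a plug with the ports `v₁` and `v₂`: a graph that can take the place of the two leaves
of `G_t` to produce a cubic 2-connected graph. The distances `δ` to the ports are what its
contribution to the Wiener index depends on. -/
structure IsPlug (P : SimpleGraph Y) (v₁ v₂ : Y) (δ : Y → ℕ) : Prop where
  ne : v₁ ≠ v₂
  not_adj : ¬P.Adj v₁ v₂
  ncard_left : (P.neighborSet v₁).ncard = 2
  ncard_right : (P.neighborSet v₂).ncard = 2
  ncard_of_ne : ∀ ⦃y⦄, y ≠ v₁ → y ≠ v₂ → (P.neighborSet y).ncard = 3
  isDistanceTo : IsDistanceTo P {v₁, v₂} δ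
  exists_isSTNumbering : ∃ σ, IsSTNumbering P v₁ v₂ σ

/-- The edges among the vertices `z₁, z₂, c₁, c₂, c₁ₐ, c₂ₐ` of `G_t`, encoded in this order. -/
def capCore : SimpleGraph (Fin 6) :=
  SimpleGraph.fromRel fun a b =>
    (a, b) ∈ [(0, 1), (0, 2), (1, 3), (2, 4), (4, 3), (3, 5), (5, 2)]

instance : DecidableRel capCore.Adj :=
  inferInstanceAs (DecidableRel fun a b => a ≠ b ∧ (_ ∨ _))

/-- The graph `capCore` with the ports of `P` attached to `c₁ₐ` and `c₂ₐ`. -/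
abbrev cap (P : SimpleGraph Y) (v₁ v₂ : Y) : SimpleGraph (Fin 6 ⊕ Y) :=
  glue capCore P fun c y => (c = 4 ∧ y = v₁) ∨ (c = 5 ∧ y = v₂)

theorem isDistanceTo_cap (h : IsDistanceTo P {v₁, v₂} δ) {z : Fin 6} {d : Fin 6 → ℕ}
    (hd : IsDistanceTo capCore {z} d) (h₄ : d 4 = 2) (h₅ : d 5 = 2) :
    IsDistanceTo (cap P v₁ v₂) {Sum.inl z} (Sum.elim d fun y => 3 + δ y) where
  eq_zero := by
    rintro _ rfl
    exact hd.eq_zero rfl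
  le_add_one := by
    have h₁ : δ v₁ = 0 := h.eq_zero (Or.inl rfl)
    have h₂ : δ v₂ = 0 := h.eq_zero (Or.inr rfl)
    rintro (a | x) (b | y) hadj
    · exact hd.le_add_one hadj
    · rcases hadj with ⟨rfl, rfl⟩ | ⟨rfl, rfl⟩ <;> simp [h₁, h₂, h₄, h₅]
    · rcases hadj with ⟨rfl, rfl⟩ | ⟨rfl, rfl⟩ <;> simp [h₁, h₂, h₄, h₅]
    · have := h.le_add_one hadj
      simp only [Sum.elim_inr]
      omega
  exists_adj := by
    rintro (a | x) hx
    · obtain ⟨b, hab, hb⟩ := hd.exists_adj fun ha => hx (congrArg Sum.inl ha)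
      exact ⟨Sum.inl b, hab, hb⟩
    · by_cases hport : x ∈ ({v₁, v₂} : Set Y)
      · have hx₀ := h.eq_zero hport
        rcases hport with rfl | rfl
        · exact ⟨Sum.inl 4, Or.inl ⟨rfl, rfl⟩, by simp [h₄, hx₀]⟩
        · exact ⟨Sum.inl 5, Or.inr ⟨rfl, rfl⟩, by simp [h₅, hx₀]⟩
      · obtain ⟨y, hxy, hy⟩ := h.exists_adj hport
        exact ⟨Sum.inr y, hxy, by simp only [Sum.elim_inr]; omega⟩

theorem isSTNumbering_cap {σ : Y → ℕ} (h : IsSTNumbering P v₁ v₂ σ) :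
    IsSTNumbering (cap P v₁ v₂) (Sum.inl 1) (Sum.inl 0)
      (Sum.elim ![σ v₂ + 6, 0, σ v₂ + 5, 1, 2, σ v₂ + 4] fun y => σ y + 3) where
  exists_lt := by
    rintro (a | x) hx
    · fin_cases a
      · exact ⟨Sum.inl 1, (by decide : capCore.Adj 0 1), by simp⟩
      · exact absurd rfl hx
      · exact ⟨Sum.inl 4, (by decide : capCore.Adj 2 4), by simp⟩
      · exact ⟨Sum.inl 1, (by decide : capCore.Adj 3 1), by simp⟩
      · exact ⟨Sum.inl 3, (by decide : capCore.Adj 4 3), by simp⟩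
      · exact ⟨Sum.inl 3, (by decide : capCore.Adj 5 3), by simp⟩
    · by_cases hport : x = v₁
      · exact ⟨Sum.inl 4, Or.inl ⟨rfl, hport⟩, by simp⟩
      · obtain ⟨y, hxy, hy⟩ := h.exists_lt hport
        exact ⟨Sum.inr y, hxy, Nat.add_lt_add_right hy 3⟩
  exists_gt := by
    rintro (a | x) hx
    · fin_cases a
      · exact absurd rfl hx
      · exact ⟨Sum.inl 3, (by decide : capCore.Adj 1 3), by simp⟩
      · exact ⟨Sum.inl 0, (by decide : capCore.Adj 2 0), by simp⟩
      · exact ⟨Sum.inl 4, (by decide : capCore.Adj 3 4), by simp⟩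
      · exact ⟨Sum.inr v₁, Or.inl ⟨rfl, rfl⟩, by simp⟩
      · exact ⟨Sum.inl 2, (by decide : capCore.Adj 5 2), by simp⟩
    · by_cases hport : x = v₂
      · exact ⟨Sum.inl 5, Or.inr ⟨rfl, hport⟩, by simp [hport]⟩
      · obtain ⟨y, hxy, hy⟩ := h.exists_gt hport
        exact ⟨Sum.inr y, hxy, Nat.add_lt_add_right hy 3⟩

theorem IsPlug.ncard_neighborSet_cap_inr [Finite Y] (h : IsPlug P v₁ v₂ δ) (y : Y) :
    ((cap P v₁ v₂).neighborSet (Sum.inr y)).ncard = 3 := by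
  rw [ncard_neighborSet_glue_inr]
  by_cases h₁ : y = v₁
  · subst h₁
    simp [h.ne, h.ncard_left]
  by_cases h₂ : y = v₂
  · subst h₂
    simp [h.ne.symm, h.ncard_right]
  · simp [h₁, h₂, h.ncard_of_ne h₁ h₂]

theorem ncard_neighborSet_cap_inl [Finite Y] (a : Fin 6) :
    ((cap P v₁ v₂).neighborSet (Sum.inl a)).ncard = if a = 0 ∨ a = 1 then 2 else 3 := by
  have hcore : ∀ a, (capCore.neighborSet a).ncard = if a = 2 ∨ a = 3 then 3 else 2 := fun a => by
    rw [Set.ncard_eq_toFinset_card']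
    decide +revert
  rw [ncard_neighborSet_glue_inl, hcore]
  fin_cases a <;> simp

end Plug

/-! ### Plugged rings of diamonds -/

section PluggedRing

variable {Y : Type*} {P : SimpleGraph Y} {v₁ v₂ : Y} {δ : Y → ℕ} {t : ℕ}

/-- The graph `G_t` with its leaves replaced by the ports `v₁` and `v₂` of `P`. -/
abbrev pluggedRing (t : ℕ) (P : SimpleGraph Y) (v₁ v₂ : Y) :
    SimpleGraph ((Fin (2 * t) × Fin 4) ⊕ (Fin 6 ⊕ Y)) :=
  layeredRing (diamondPos (2 * t)) (3 * (2 * t)) (cap P v₁ v₂) (Sum.inl 0) (Sum.inl 1)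

theorem IsPlug.isCubic_pluggedRing [Finite Y] (h : IsPlug P v₁ v₂ δ) (ht : 1 ≤ t) :
    IsCubic (pluggedRing t P v₁ v₂) := by
  rintro (x | a | y)
  · exact ncard_neighborSet_diamondRing x
  · have hlast : {x | diamondPos (2 * t) x + 1 = 3 * (2 * t)} = {(⟨2 * t - 1, by omega⟩, 1)} := by
      ext x
      rw [Set.mem_singleton_iff, ← diamondPos_eq_three_mul_add_two_iff, Set.mem_ofPred_eq]
      dsimp only
      omega
    have hfirst : {x | diamondPos (2 * t) x = 0} = {(⟨0, by omega⟩, 0)} := by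
      ext x
      exact diamondPos_eq_three_mul_iff (j := ⟨0, _⟩)
    rw [ncard_neighborSet_glue_inr, ncard_neighborSet_cap_inl]
    fin_cases a <;> simp [hlast, hfirst]
  · rw [ncard_neighborSet_glue_inr, h.ncard_neighborSet_cap_inr]
    simp

theorem IsPlug.twoConnected_pluggedRing [Fintype Y] (h : IsPlug P v₁ v₂ δ) :
    TwoConnected (pluggedRing t P v₁ v₂) := by
  obtain ⟨σ, hσ⟩ := h.exists_isSTNumbering
  have hst := (isLayering_diamondPos (2 * t)).isSTNumbering (by simp) (isSTNumbering_cap hσ)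
  refine ⟨hst.connected, ?_, hst.deleteVertex_connected (by decide : capCore.Adj 1 0)⟩
  simp only [Fintype.card_sum, Fintype.card_fin]
  omega

/-- Deleting a middle vertex of the ring lengthens the other distances by
`16 * t ^ 3 + 4 * t ^ 2 - 2 * t`; its own distances within the ring amount to `12 * t ^ 2`. -/
theorem sum_detour_eq_add_sum_cap [Fintype Y] {m : ℕ} (hm : m + 1 = 3 * t) {d : Fin 6 → ℕ}
    (hd : ∑ a, d a = 8) (hδ : ∑ y, (3 * t + 3 + δ y) + 8 * t ^ 2 + 20 * t + 8 = 16 * t ^ 3) :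
    ∑ x, ∑ y, detour (3 * (2 * t)) m (diamondPos (2 * t) x) (diamondPos (2 * t) y) =
      ∑ x, ((diamondPos (2 * t) x - m) + (m - diamondPos (2 * t) x)) +
        ∑ k : Fin 6 ⊕ Y, (m + 1 + Sum.elim d (fun y => 3 + δ y) k) := by
  have hcost := sum_sum_detour_diamondPos hm
  have hcap : ∑ a, (3 * t + d a) = 18 * t + 8 := by
    rw [sum_add_distrib, hd]
    simp only [sum_const, card_univ, Fintype.card_fin, smul_eq_mul]
    ring
  simp only [sum_dist_diamondPos hm, Fintype.sum_sum_type, Sum.elim_inl, Sum.elim_inr, hm, hcap,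
    ← add_assoc]
  omega

theorem IsPlug.isSoltes_left [Fintype Y] (h : IsPlug P v₁ v₂ δ) (ht : 1 ≤ t)
    (hδ : ∑ y, (3 * t + 3 + δ y) + 8 * t ^ 2 + 20 * t + 8 = 16 * t ^ 3) :
    IsSoltes (pluggedRing t P v₁ v₂) (Sum.inl (⟨t - 1, by omega⟩, 1)) := by
  obtain ⟨σ, hσ⟩ := h.exists_isSTNumbering
  have hpos {x} : diamondPos (2 * t) x = 3 * t - 1 ↔ x = (⟨t - 1, by omega⟩, 1) := by
    rw [← diamondPos_eq_three_mul_add_two_iff]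
    dsimp only
    omega
  have hd : IsDistanceTo capCore {1} ![1, 0, 2, 1, 2, 2] := ⟨by simp, by decide, by decide⟩
  have hz : (cap P v₁ v₂).Adj (Sum.inl 0) (Sum.inl 1) := (by decide : capCore.Adj 0 1)
  exact (isLayering_diamondPos _).isSoltes (m := 3 * t - 1) (by omega) hz
    (isSTNumbering_cap hσ) (isDistanceTo_cap h.isDistanceTo hd rfl rfl) (hpos.2 rfl)
    (fun x hx => hpos.1 (hx.trans (hpos.2 rfl))) (sum_detour_eq_add_sum_cap (by omega) rfl hδ)

theorem IsPlug.isSoltes_right [Fintype Y] (h : IsPlug P v₁ v₂ δ) (ht : 1 ≤ t)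
    (hδ : ∑ y, (3 * t + 3 + δ y) + 8 * t ^ 2 + 20 * t + 8 = 16 * t ^ 3) :
    IsSoltes (pluggedRing t P v₁ v₂) (Sum.inl (⟨t, by omega⟩, 0)) := by
  obtain ⟨σ, hσ⟩ := h.exists_isSTNumbering
  obtain ⟨N, hN⟩ := (Set.finite_range (Sum.elim ![σ v₂ + 6, 0, σ v₂ + 5, 1, 2, σ v₂ + 4]
    fun y => σ y + 3)).bddAbove
  have hlayers := isLayering_diamondPos (2 * t)
  have hpos {x} : 3 * (2 * t) - 1 - diamondPos (2 * t) x = 3 * t - 1 ↔ x = (⟨t, by omega⟩, 0) := by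
    have := hlayers.lt x
    rw [← diamondPos_eq_three_mul_iff]
    dsimp only
    omega
  have hd : IsDistanceTo capCore {0} ![0, 1, 1, 2, 2, 2] := ⟨by simp, by decide, by decide⟩
  have hz : (cap P v₁ v₂).Adj (Sum.inl 1) (Sum.inl 0) := (by decide : capCore.Adj 1 0)
  rw [pluggedRing, ← layeredRing_reverse hlayers]
  refine hlayers.reverse.isSoltes (m := 3 * t - 1) (by omega) hz
    ((isSTNumbering_cap hσ).reverse fun k => hN ⟨k, rfl⟩)
    (isDistanceTo_cap h.isDistanceTo hd rfl rfl) (hpos.2 rfl)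
    (fun x hx => hpos.1 (hx.trans (hpos.2 rfl))) ?_
  rw [sum_diamondPos_reverse _ fun i => (i - (3 * t - 1)) + (3 * t - 1 - i),
    ← sum_detour_eq_add_sum_cap (by omega) rfl hδ,
    sum_diamondPos_reverse _ fun i => ∑ y, detour _ _ i (3 * (2 * t) - 1 - diamondPos _ y)]
  exact sum_congr rfl fun x _ => sum_diamondPos_reverse _ fun j => detour _ _ _ j

end PluggedRing

/-! ### Ladder plugs -/

section Ladder

/-- The ladder with the rows `0, …, m` in which the rungs `0`, `1`, `m - 1` and those in `S` are
missing, while the rows `0` and `1`, and likewise `m - 1` and `m`, are completely joined. -/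
def ladder (m : ℕ) (S : Set ℕ) : SimpleGraph (Fin (m + 1) × Bool) :=
  SimpleGraph.fromRel fun x y =>
    ((y.1 : ℕ) = x.1 + 1 ∧ (x.2 = y.2 ∨ (x.1 : ℕ) = 0 ∨ (y.1 : ℕ) = m)) ∨
      (x.1 = y.1 ∧ 2 ≤ (x.1 : ℕ) ∧ (x.1 : ℕ) + 1 ≠ m ∧ (x.1 : ℕ) ∉ S)

theorem ladder_adj {m i j : ℕ} {S : Set ℕ} {hi : i < m + 1} {hj : j < m + 1} {s s' : Bool} :
    (ladder m S).Adj (⟨i, hi⟩, s) (⟨j, hj⟩, s') ↔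
      (j = i + 1 ∧ (s = s' ∨ i = 0 ∨ j = m)) ∨ (i = j + 1 ∧ (s = s' ∨ j = 0 ∨ i = m)) ∨
        (i = j ∧ s' = !s ∧ 2 ≤ i ∧ i + 1 ≠ m ∧ i ∉ S) := by
  simp only [ladder, fromRel_adj, ne_eq, Prod.mk.injEq, Fin.mk.injEq]
  cases s <;> cases s' <;> grind

theorem ncard_neighborSet_ladder_eq_two {m i : ℕ} {S : Set ℕ} (hm : 3 ≤ m) (hi : i < m + 1)
    (hS : i ∈ S → 2 ≤ i ∧ i + 2 ≤ m) (s : Bool) (h : i = 0 ∨ i ∈ S) :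
    ((ladder m S).neighborSet (⟨i, hi⟩, s)).ncard = 2 := by
  rw [Set.ncard_eq_two]
  rcases h with rfl | h
  · refine ⟨(⟨1, by omega⟩, false), (⟨1, by omega⟩, true), by simp, ?_⟩
    ext ⟨⟨j, hj⟩, s'⟩
    simp only [mem_neighborSet, ladder_adj, Set.mem_insert_iff, Set.mem_singleton_iff,
      Prod.mk.injEq, Fin.mk.injEq]
    grind
  · have := hS h
    refine ⟨(⟨i - 1, by omega⟩, s), (⟨i + 1, by omega⟩, s), by simp, ?_⟩
    ext ⟨⟨j, hj⟩, s'⟩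
    simp only [mem_neighborSet, ladder_adj, Set.mem_insert_iff, Set.mem_singleton_iff,
      Prod.mk.injEq, Fin.mk.injEq]
    grind

theorem ncard_neighborSet_ladder_eq_three {m i : ℕ} {S : Set ℕ} (hm : 3 ≤ m) (hi : i < m + 1)
    (s : Bool) (h₀ : i ≠ 0) (hiS : i ∉ S) :
    ((ladder m S).neighborSet (⟨i, hi⟩, s)).ncard = 3 := by
  rw [Set.ncard_eq_three]
  rcases (by omega : i = 1 ∨ i + 1 = m ∨ i = m ∨ (2 ≤ i ∧ i + 2 ≤ m)) with h | h | h | h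
  · refine ⟨(⟨0, by omega⟩, false), (⟨0, by omega⟩, true), (⟨2, by omega⟩, s), by simp, by simp,
      by simp, ?_⟩
    ext ⟨⟨j, hj⟩, s'⟩
    simp only [mem_neighborSet, ladder_adj, Set.mem_insert_iff, Set.mem_singleton_iff,
      Prod.mk.injEq, Fin.mk.injEq]
    grind
  · refine ⟨(⟨m, by omega⟩, false), (⟨m, by omega⟩, true), (⟨i - 1, by omega⟩, s), by simp,
      by grind, by grind, ?_⟩
    ext ⟨⟨j, hj⟩, s'⟩
    simp only [mem_neighborSet, ladder_adj, Set.mem_insert_iff, Set.mem_singleton_iff,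
      Prod.mk.injEq, Fin.mk.injEq]
    grind
  · refine ⟨(⟨m - 1, by omega⟩, false), (⟨m - 1, by omega⟩, true), (⟨m, by omega⟩, !s), by simp,
      by grind, by grind, ?_⟩
    ext ⟨⟨j, hj⟩, s'⟩
    simp only [mem_neighborSet, ladder_adj, Set.mem_insert_iff, Set.mem_singleton_iff,
      Prod.mk.injEq, Fin.mk.injEq]
    grind
  · refine ⟨(⟨i - 1, by omega⟩, s), (⟨i + 1, by omega⟩, s), (⟨i, by omega⟩, !s), by simp,
      by simp, by simp, ?_⟩
    ext ⟨⟨j, hj⟩, s'⟩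
    simp only [mem_neighborSet, ladder_adj, Set.mem_insert_iff, Set.mem_singleton_iff,
      Prod.mk.injEq, Fin.mk.injEq]
    grind

variable {M : Type*} {m : ℕ} {Q : SimpleGraph M} {row : M → ℕ}

/-- The ladder in which the rungs `row k` are subdivided by vertices `k : M`, with the edges of
`Q` between them. -/
abbrev subdividedLadder (m : ℕ) (Q : SimpleGraph M) (row : M → ℕ) :
    SimpleGraph ((Fin (m + 1) × Bool) ⊕ M) :=
  glue (ladder m (Set.range row)) Q fun x k => (x.1 : ℕ) = row k

theorem isDistanceTo_subdividedLadder (hrow : ∀ k, row k ≤ m)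
    (hQ : ∀ ⦃k l⦄, Q.Adj k l → row k ≤ row l + 1) :
    IsDistanceTo (subdividedLadder m Q row) {Sum.inl (0, false), Sum.inl (0, true)}
      (Sum.elim (fun x => x.1) fun k => row k + 1) where
  eq_zero := by
    rintro _ (rfl | rfl) <;> rfl
  le_add_one := by
    rintro (⟨⟨i, hi⟩, s⟩ | k) (⟨⟨j, hj⟩, s'⟩ | l) hadj
    · have := ladder_adj.1 hadj
      simp only [Sum.elim_inl]
      grind
    · exact (congrArg (· + 1) (hadj : i = row l)).ge
    · have : j = row k := hadj
      simp only [Sum.elim_inl, Sum.elim_inr]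
      omega
    · simpa using hQ hadj.symm
  exists_adj := by
    rintro (⟨⟨i, hi⟩, s⟩ | k) hx
    · have h₀ : i ≠ 0 := by
        rintro rfl
        cases s <;> simp at hx
      exact ⟨Sum.inl (⟨i - 1, by omega⟩, s), ladder_adj.2 (by grind), by grind⟩
    · exact ⟨Sum.inl (⟨row k, by have := hrow k; omega⟩, false), rfl, rfl⟩

theorem isSTNumbering_subdividedLadder (hm : 2 ≤ m) (hrow : ∀ k, row k < m) :
    IsSTNumbering (subdividedLadder m Q row) (Sum.inl (0, false)) (Sum.inl (0, true))
      (Sum.elim (fun x => cond x.2 (2 * m + 1 - x.1) x.1) fun _ => m) where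
  exists_lt := by
    rintro (⟨⟨i, hi⟩, _ | _⟩ | k) hx
    · have h₀ : i ≠ 0 := by
        rintro rfl
        exact hx rfl
      exact ⟨Sum.inl (⟨i - 1, by omega⟩, false), ladder_adj.2 (by grind), by grind⟩
    · rcases (Nat.lt_succ_iff.1 hi).eq_or_lt with rfl | hlt
      · exact ⟨Sum.inl (⟨i, hi⟩, false), ladder_adj.2 (by grind), by grind⟩
      · exact ⟨Sum.inl (⟨i + 1, by omega⟩, true), ladder_adj.2 (by grind), by grind⟩
    · exact ⟨Sum.inl (⟨row k, by grind⟩, false), rfl, hrow k⟩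
  exists_gt := by
    rintro (⟨⟨i, hi⟩, _ | _⟩ | k) hx
    · rcases (Nat.lt_succ_iff.1 hi).eq_or_lt with rfl | hlt
      · exact ⟨Sum.inl (⟨i, hi⟩, true), ladder_adj.2 (by grind), by grind⟩
      · exact ⟨Sum.inl (⟨i + 1, by omega⟩, false), ladder_adj.2 (by grind), by grind⟩
    · have h₀ : i ≠ 0 := by
        rintro rfl
        exact hx rfl
      exact ⟨Sum.inl (⟨i - 1, by omega⟩, true), ladder_adj.2 (by grind), by grind⟩
    · exact ⟨Sum.inl (⟨row k, by grind⟩, true), rfl, by grind⟩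

theorem ncard_neighborSet_subdividedLadder_inl [Finite M] (hm : 3 ≤ m)
    (hinj : Function.Injective row) (hrow : ∀ k, 2 ≤ row k ∧ row k + 2 ≤ m) {i : ℕ}
    (hi : i < m + 1) (s : Bool) :
    ((subdividedLadder m Q row).neighborSet (Sum.inl (⟨i, hi⟩, s))).ncard =
      if i = 0 then 2 else 3 := by
  have hS : i ∈ Set.range row → 2 ≤ i ∧ i + 2 ≤ m := by
    rintro ⟨k, rfl⟩
    exact hrow k
  rw [ncard_neighborSet_glue_inl]
  by_cases hmem : i ∈ Set.range row
  · have hsingle : {k | i = row k}.ncard = 1 := by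
      obtain ⟨k, rfl⟩ := hmem
      simp [hinj.eq_iff]
    rw [ncard_neighborSet_ladder_eq_two hm hi hS s (Or.inr hmem), hsingle,
      if_neg (by have := hS hmem; omega)]
  · have hnone : {k | i = row k} = ∅ :=
      Set.eq_empty_of_forall_notMem fun k hk => hmem ⟨k, hk.symm⟩
    rw [hnone, Set.ncard_empty, add_zero]
    split_ifs with h₀
    · exact ncard_neighborSet_ladder_eq_two hm hi hS s (Or.inl h₀)
    · exact ncard_neighborSet_ladder_eq_three hm hi s h₀ hmem

theorem ncard_neighborSet_subdividedLadder_inr [Finite M] (k : M) (hrow : row k ≤ m) :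
    ((subdividedLadder m Q row).neighborSet (Sum.inr k)).ncard =
      (Q.neighborSet k).ncard + 2 := by
  have hrails : {x : Fin (m + 1) × Bool | (x.1 : ℕ) = row k} =
      {(⟨row k, by omega⟩, false), (⟨row k, by omega⟩, true)} := by
    ext ⟨i, s⟩
    cases s <;> simp [Fin.ext_iff]
  rw [ncard_neighborSet_glue_inr, hrails, Set.ncard_pair (by simp), add_comm]

theorem isPlug_subdividedLadder [Finite M] (hm : 3 ≤ m) (hinj : Function.Injective row)
    (hrow : ∀ k, 2 ≤ row k ∧ row k + 2 ≤ m) (hQ : ∀ k, (Q.neighborSet k).ncard = 1)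
    (hQrow : ∀ ⦃k l⦄, Q.Adj k l → row k ≤ row l + 1) :
    IsPlug (subdividedLadder m Q row) (Sum.inl (0, false)) (Sum.inl (0, true))
      (Sum.elim (fun x => x.1) fun k => row k + 1) where
  ne := by simp
  not_adj h := by
    simpa using (ladder_adj (hi := m.succ_pos) (hj := m.succ_pos)).1 h
  ncard_left := ncard_neighborSet_subdividedLadder_inl hm hinj hrow m.succ_pos false
  ncard_right := ncard_neighborSet_subdividedLadder_inl hm hinj hrow m.succ_pos true
  ncard_of_ne := by
    rintro (⟨⟨i, hi⟩, s⟩ | k) h₁ h₂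
    · have h₀ : i ≠ 0 := by
        rintro rfl
        cases s <;> contradiction
      rw [ncard_neighborSet_subdividedLadder_inl hm hinj hrow, if_neg h₀]
    · rw [ncard_neighborSet_subdividedLadder_inr k (by have := hrow k; omega), hQ]
  isDistanceTo := isDistanceTo_subdividedLadder (fun k => by have := hrow k; omega) hQrow
  exists_isSTNumbering :=
    ⟨_, isSTNumbering_subdividedLadder (by omega) fun k => by have := hrow k; omega⟩

theorem sum_subdividedLadder (c m : ℕ) [Fintype M] :
    ∑ y : (Fin (m + 1) × Bool) ⊕ M,
        (c + Sum.elim (fun x => (x.1 : ℕ)) (fun k => row k + 1) y) =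
      (m + 1) * (2 * c + m) + ∑ k, (c + row k + 1) := by
  have hrails : ∑ i ∈ range (m + 1), 2 * (c + i) = (m + 1) * (2 * c + m) := by
    induction m with
    | zero => simp
    | succ m ih =>
      rw [sum_range_succ, ih]
      ring
  rw [← hrails, sum_range, Fintype.sum_sum_type, Fintype.sum_prod_type]
  simp [two_mul, add_assoc]

end Ladder

section Parameters

theorem exists_add_eq_of_le {k m : ℕ} (hk : 6 ≤ k) (hkm : k + 8 ≤ 2 * m) :
    ∃ A B, A + B = k ∧ 2 ≤ A ∧ A + 2 ≤ B ∧ B + 3 ≤ m := by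
  by_cases h : k + 1 ≤ m
  · exact ⟨2, k - 2, by omega⟩
  · exact ⟨k + 3 - m, m - 3, by omega⟩

theorem exists_le_and_lt_succ {f : ℕ → ℕ} (hf : ∀ m, m ≤ f m) {a N : ℕ} (ha : f a ≤ N) :
    ∃ m, a ≤ m ∧ f m ≤ N ∧ N < f (m + 1) := by
  have haN : a ≤ N := (hf a).trans ha
  refine ⟨Nat.findGreatest (f · ≤ N) N, Nat.le_findGreatest haN ha,
    Nat.findGreatest_spec (P := (f · ≤ N)) haN ha, ?_⟩
  by_contra! hle
  exact Nat.findGreatest_is_greatest (Nat.lt_succ_self _) ((hf _).trans hle) hle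

theorem exists_ladder_parameters {t : ℕ} (ht : 4 ≤ t) :
    ∃ m A B, 2 ≤ A ∧ A + 2 ≤ B ∧ B + 3 ≤ m ∧
      (m + 1) * (2 * (3 * t + 3) + m) + 2 * (A + B) + 8 * t ^ 2 + 32 * t + 26 = 16 * t ^ 3 := by
  obtain rfl | rfl | ht : t = 4 ∨ t = 5 ∨ 6 ≤ t := by omega
  · exact ⟨15, 2, 9, by norm_num⟩
  · exact ⟨25, 2, 12, by norm_num⟩
  -- For the largest `m` that leaves room for `A + B ≥ 6`, also `A + B ≤ 2 * m - 8`.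
  have hlow : (3 * t + 17 + 1) * (2 * (3 * t + 3) + (3 * t + 17)) +
      8 * t ^ 2 + 32 * t + 38 ≤ 16 * t ^ 3 := by
    obtain ⟨d, rfl⟩ := Nat.exists_eq_add_of_le ht
    ring_nf
    nlinarith [Nat.zero_le (d ^ 2), Nat.zero_le (d ^ 3)]
  obtain ⟨m, hm, hle, hlt⟩ := exists_le_and_lt_succ
    (f := fun m => (m + 1) * (2 * (3 * t + 3) + m) + 8 * t ^ 2 + 32 * t + 38)
    (fun m => by nlinarith) hlow
  obtain ⟨r, hr⟩ := Nat.even_mul_succ_self m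
  obtain ⟨k, hk⟩ : ∃ k, (m + 1) * (2 * (3 * t + 3) + m) + 2 * k + 8 * t ^ 2 + 32 * t + 26 =
      16 * t ^ 3 := by
    have heven : (m + 1) * (2 * (3 * t + 3) + m) = 2 * (r + (m + 1) * (3 * t + 3)) := by
      linear_combination hr
    exact ⟨8 * t ^ 3 - r - (m + 1) * (3 * t + 3) - 4 * t ^ 2 - 16 * t - 13, by omega⟩
  have hstep : (m + 1 + 1) * (2 * (3 * t + 3) + (m + 1)) =
      (m + 1) * (2 * (3 * t + 3) + m) + 2 * (3 * t + 4 + m) := by ring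
  obtain ⟨A, B, hAB, hA, hAB', hB⟩ := exists_add_eq_of_le (k := k) (m := m) (by omega) (by omega)
  exact ⟨m, A, B, hA, hAB', hB, by rw [hAB, hk]⟩

end Parameters

/-- A sporadic plug with the ports `0` and `19`, found by computer search: the path `0, …, 19` with
chords. The ladders are too large for `t = 3`. -/
def chordPath : SimpleGraph (Fin 20) :=
  SimpleGraph.fromRel fun x y =>
    (x : ℕ) + 1 = y ∨
      y = ![4, 19, 6, 9, 0, 18, 2, 14, 10, 3, 8, 15, 17, 16, 7, 11, 13, 12, 5, 1] x

instance : DecidableRel chordPath.Adj :=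
  inferInstanceAs (DecidableRel fun a b => a ≠ b ∧ (_ ∨ _))

theorem isPlug_chordPath :
    IsPlug chordPath 0 19 ![0, 1, 2, 2, 1, 2, 3, 4, 4, 3, 4, 4, 3, 4, 5, 4, 3, 2, 1, 0] where
  ne := by decide
  not_adj := by decide
  ncard_left := by
    rw [Set.ncard_eq_toFinset_card']
    decide
  ncard_right := by
    rw [Set.ncard_eq_toFinset_card']
    decide
  ncard_of_ne y := by
    rw [Set.ncard_eq_toFinset_card']
    decide +kernel +revert
  isDistanceTo := ⟨by simp, by decide +kernel, by simpa using by decide +kernel⟩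
  exists_isSTNumbering := ⟨Fin.val, by decide +kernel, by decide +kernel⟩

theorem exists_isPlug {t : ℕ} (ht : 3 ≤ t) :
    ∃ (Y : Type) (_ : Fintype Y) (P : SimpleGraph Y) (v₁ v₂ : Y) (δ : Y → ℕ),
      IsPlug P v₁ v₂ δ ∧ ∑ y, (3 * t + 3 + δ y) + 8 * t ^ 2 + 20 * t + 8 = 16 * t ^ 3 := by
  obtain rfl | ht := ht.eq_or_lt
  · exact ⟨Fin 20, inferInstance, chordPath, 0, 19, _, isPlug_chordPath, by decide⟩
  · obtain ⟨m, A, B, hA, hAB, hB, hsum⟩ := exists_ladder_parameters ht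
    let row : Bool × Bool → ℕ := fun k => cond k.1 A B + cond k.2 1 0
    have hinj : Function.Injective row := by
      rintro ⟨_ | _, _ | _⟩ ⟨_ | _, _ | _⟩ <;> grind
    refine ⟨_, inferInstance, subdividedLadder m (⊥ □ ⊤) row, _, _, _,
      isPlug_subdividedLadder (by omega) hinj (by grind) ?_ ?_, ?_⟩
    · rintro ⟨e, h⟩
      refine Set.ncard_eq_one.2 ⟨(e, !h), ?_⟩
      ext ⟨e', h'⟩
      cases h <;> cases h' <;> simp [eq_comm]
    · rintro ⟨e, h⟩ ⟨e', h'⟩ (⟨hbot, -⟩ | ⟨-, hee'⟩)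
      · exact hbot.elim
      · grind
    · rw [sum_subdividedLadder, ← hsum]
      simp only [row, Fintype.sum_prod_type, Fintype.sum_bool, cond_true, cond_false]
      ring

/-! ### The copy of `G_t` in a plugged ring -/

section Inclusion

variable {Y : Type*} {P : SimpleGraph Y} {v₁ v₂ : Y} {δ : Y → ℕ} {t : ℕ}

/-- The vertices `z₁, z₂, c₁, c₂, c₁ₐ, c₂ₐ, v₁, v₂` of `G_t` as vertices of `cap P v₁ v₂`. -/
def capVertex (v₁ v₂ : Y) : Fin 8 → Fin 6 ⊕ Y :=
  ![Sum.inl 0, Sum.inl 1, Sum.inl 2, Sum.inl 3, Sum.inl 4, Sum.inl 5, Sum.inr v₁, Sum.inr v₂]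

theorem capVertex_injective (h : v₁ ≠ v₂) : Function.Injective (capVertex v₁ v₂) := by
  intro a b hab
  fin_cases a <;> fin_cases b <;> simp_all [capVertex, eq_comm]

theorem cap_adj_capVertex (hne : v₁ ≠ v₂) (hadj : ¬P.Adj v₁ v₂) {a b : Fin 8} :
    (cap P v₁ v₂).Adj (capVertex v₁ v₂ a) (capVertex v₁ v₂ b) ↔
      (GtGraph t).Adj (Sum.inr a) (Sum.inr b) := by
  fin_cases a <;> fin_cases b <;>
    simp [capVertex, GtGraph, gtRel, capCore, hne, hne.symm, hadj, P.adj_comm v₂ v₁]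

theorem pluggedRing_adj_inl_capVertex {x : Fin (2 * t) × Fin 4} {a : Fin 8} :
    (pluggedRing t P v₁ v₂).Adj (Sum.inl x) (Sum.inr (capVertex v₁ v₂ a)) ↔
      (GtGraph t).Adj (Sum.inl x) (Sum.inr a) := by
  obtain ⟨j, b⟩ := x
  fin_cases a <;> fin_cases b <;> simp [capVertex, GtGraph, gtRel, diamondPos] <;> omega

/-- The copy of `G_t` in the plugged ring: the leaves are sent to the ports. -/
def IsPlug.gtEmbedding (h : IsPlug P v₁ v₂ δ) (t : ℕ) :
    GtGraph t ↪g pluggedRing t P v₁ v₂ where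
  toFun := Sum.map id (capVertex v₁ v₂)
  inj' := Sum.map_injective.2 ⟨Function.injective_id, capVertex_injective h.ne⟩
  map_rel_iff' := by
    rintro (x | a) (y | b)
    · exact gtGraph_adj_inl_inl.symm
    · exact pluggedRing_adj_inl_capVertex
    · exact ((adj_comm _ _ _).trans pluggedRing_adj_inl_capVertex).trans (adj_comm _ _ _)
    · exact cap_adj_capVertex h.ne h.not_adj

theorem IsPlug.eq_gtv1_or_eq_gtv2_of_adj_gtEmbedding (h : IsPlug P v₁ v₂ δ) {x : GtV t}
    {w : (Fin (2 * t) × Fin 4) ⊕ (Fin 6 ⊕ Y)} (hw : w ∉ Set.range (h.gtEmbedding t))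
    (hadj : (pluggedRing t P v₁ v₂).Adj (h.gtEmbedding t x) w) :
    x = gtv1 t ∨ x = gtv2 t := by
  rcases w with y | c | y
  · exact absurd ⟨Sum.inl y, rfl⟩ hw
  · refine absurd ⟨Sum.inr (c.castLE (by decide)), ?_⟩ hw
    fin_cases c <;> rfl
  · have hy₁ : y ≠ v₁ := fun hy => hw ⟨gtv1 t, by rw [hy]; rfl⟩
    have hy₂ : y ≠ v₂ := fun hy => hw ⟨gtv2 t, by rw [hy]; rfl⟩
    rcases x with x | a
    · simp [gtEmbedding] at hadj
    · fin_cases a <;> simp_all [gtEmbedding, capVertex, gtv1, gtv2]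

end Inclusion

/-- For every `t ≥ 3` there exists a cubic 2-connected graph `H`
containing `G_t` as an induced subgraph (via an injection `f`), every edge of `H`
from `G_t` to the outside being incident to `v₁` or `v₂`, in which both `u₁` and
`u₂` are Šoltés vertices. -/
theorem gt_extends_to_cubic_twoConnected_with_soltes_u1_u2 (t : ℕ) (ht : 3 ≤ t) :
    ∃ (n : ℕ) (H : SimpleGraph (Fin n)) (f : GtV t → Fin n),
      Function.Injective f ∧
      (∀ x y : GtV t, H.Adj (f x) (f y) ↔ (GtGraph t).Adj x y) ∧
      (∀ (x : GtV t) (w : Fin n), w ∉ Set.range f → H.Adj (f x) w →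
        x = gtv1 t ∨ x = gtv2 t) ∧
      IsCubic H ∧ TwoConnected H ∧
      IsSoltes H (f (gtu1 t (by omega))) ∧ IsSoltes H (f (gtu2 t (by omega))) := by
  obtain ⟨Y, _, P, v₁, v₂, δ, hP, hδ⟩ := exists_isPlug ht
  let φ := (pluggedRing t P v₁ v₂).overFinIso rfl
  refine ⟨_, _, φ ∘ hP.gtEmbedding t, φ.injective.comp (hP.gtEmbedding t).injective,
    fun x y => φ.map_adj_iff.trans (hP.gtEmbedding t).map_adj_iff, fun x w hw hadj => ?_,
    (hP.isCubic_pluggedRing (by omega)).congr φ, hP.twoConnected_pluggedRing.congr φ,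
    (hP.isSoltes_left (by omega) hδ).congr φ, (hP.isSoltes_right (by omega) hδ).congr φ⟩
  obtain ⟨w, rfl⟩ := φ.surjective w
  refine hP.eq_gtv1_or_eq_gtv2_of_adj_gtEmbedding ?_ (φ.map_adj_iff.1 hadj)
  rintro ⟨y, rfl⟩
  exact hw ⟨y, rfl⟩
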